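/- arXiv:1007.3690 — 5 statements merged into one kernel-verified Lean document; each statement's English description precedes it below -/
import Mathlib

section
/- Let k be a field, R = k[x₁,x₂,y₁,y₂], a₁ = (x₁,x₂), a₂ = (y₁,y₂), B = a₁·a₂, and m = a₁ + a₂. Then there is an isomorphism of R-modules H^3_B(R) ≅ H^4_m(R). -/
/-!
Both modules are computed along systems of ideals built from `I_t = (x₁^t, x₂^t)` and
`J_t = (y₁^t, y₂^t)`. By Artin–Rees, `I_t ⊓ J_t` is cofinal with the powers of `B`, and
`I_t ⊔ J_t` is cofinal with the powers of `m`, so that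
`H^i_B(R) = colim Ext^i(R/(I_t ⊓ J_t), R)` and `H^i_m(R) = colim Ext^i(R/(I_t ⊔ J_t), R)`
(`seqIso`). The Mayer–Vietoris sequence
`0 → R/(I_t ⊓ J_t) → R/I_t × R/J_t → R/(I_t ⊔ J_t) → 0` gives a connecting map
`Ext^3(R/(I_t ⊓ J_t), R) → Ext^4(R/(I_t ⊔ J_t), R)`. Since `x₁^t, x₂^t` and `y₁^t, y₂^t` are
regular sequences, `R/I_t` and `R/J_t` have projective dimension at most `2`, so `Ext^3` and
`Ext^4` of the middle term vanish and the connecting map is bijective (`mvDelta_bijective`).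
It is natural in `t`, so passing to the colimit gives the isomorphism (`mayerVietoris`).

Local cohomology in Mathlib is built on `Ext R (ModuleCat R) n`, the left derived functor of the
linear Yoneda functor, while long exact sequences are available for `CategoryTheory.Abelian.Ext`,
defined by the derived category. In positive degrees both are cocycles on a projective
resolution modulo coboundaries, and `extComparison` identifies them, naturally in the first
variable (`extComparison_naturality`).
-/

open MvPolynomial

/-- The polynomial ring `R = k[x₁,x₂,y₁,y₂]` in four variables,
with `X 0, X 1` playing the role of `x₁, x₂` and `X 2, X 3` of `y₁, y₂`. -/
noncomputable abbrev polyR (k : Type) [Field k] : Type := MvPolynomial (Fin 4) k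

/-- The ideal `a₁ = (x₁, x₂)`. -/
noncomputable def idealA1 (k : Type) [Field k] : Ideal (polyR k) := Ideal.span {X 0, X 1}

/-- The ideal `a₂ = (y₁, y₂)`. -/
noncomputable def idealA2 (k : Type) [Field k] : Ideal (polyR k) := Ideal.span {X 2, X 3}

/-- The irrelevant ideal `B = a₁ · a₂`. -/
noncomputable def idealB (k : Type) [Field k] : Ideal (polyR k) := idealA1 k * idealA2 k

/-- The maximal ideal `m = a₁ + a₂` corresponding to the origin. -/
noncomputable def idealM (k : Type) [Field k] : Ideal (polyR k) := idealA1 k + idealA2 k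

section generalities
open CategoryTheory Limits
universe u

/-! ### Comparison of the two constructions of Ext -/

section bridge
variable {R : Type u} [CommRing R]

/-- The map of cochain complexes `Hom(L, Y) ⟶ Hom(K, Y)` given by precomposition with a chain map
`φ : K ⟶ L`. -/
noncomputable def yonMap {K L : ChainComplex (ModuleCat.{u} R) ℕ} (φ : K ⟶ L) (Y : ModuleCat.{u} R) :
    L.linearYonedaObj R Y ⟶ K.linearYonedaObj R Y :=
  (HomologicalComplex.unopFunctor _ _).map
    ((((linearYoneda R _).obj Y).rightOp.mapHomologicalComplex _).map φ).op

lemma unop_iso_square {C : Type*} [Category C] {a a' : Cᵒᵖ} {b b' : C} (e : a ≅ Opposite.op b)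
    (e' : a' ≅ Opposite.op b') (f : a ⟶ a') (g : b' ⟶ b) (h : f ≫ e'.hom = e.hom ≫ g.op) :
    e'.inv.unop ≫ g = f.unop ≫ e.inv.unop := by
  apply Quiver.Hom.op_inj
  rw [op_comp, op_comp, Quiver.Hom.op_unop, Quiver.Hom.op_unop, Quiver.Hom.op_unop,
    Iso.eq_inv_comp, ← Category.assoc, ← h, Category.assoc, Iso.hom_inv_id, Category.comp_id]

lemma paste_squares {C : Type*} [Category C] {a b c a' b' c' : C} {f : a ⟶ b} {g : b ⟶ c}
    {f' : a' ⟶ b'} {g' : b' ⟶ c'} {u : a ⟶ a'} {v : b ⟶ b'} {w : c ⟶ c'}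
    (h₁ : u ≫ f' = f ≫ v) (h₂ : g ≫ w = v ≫ g') : u ≫ f' ≫ g' = (f ≫ g) ≫ w := by
  rw [Category.assoc, h₂, ← Category.assoc, h₁, Category.assoc]

/-- A map `φ` of projective resolutions lifting `g` computes the map `Ext(g, Y)`. -/
lemma isoExt_naturality {X X' : ModuleCat.{u} R} (g : X' ⟶ X) (P' : ProjectiveResolution X')
    (P : ProjectiveResolution X) (φ : P'.Hom P g) (n : ℕ) (Y : ModuleCat.{u} R) :
    ((Ext R (ModuleCat.{u} R) n).map g.op).app Y ≫ (P'.isoExt n Y).hom =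
      (P.isoExt n Y).hom ≫ HomologicalComplex.homologyMap (yonMap φ.hom Y) n := by
  have h₁ := ProjectiveResolution.isoLeftDerivedObj_inv_naturality g P' P φ.hom
    (φ.hom_f_zero_comp_π_f_zero.trans (by simp))
    ((linearYoneda R (ModuleCat.{u} R)).obj Y).rightOp n
  have h₂ := unop_iso_square _ _ _ _
    (HomologicalComplex.homologyOp_hom_naturality (yonMap φ.hom Y) n)
  exact paste_squares (congrArg Quiver.Hom.unop h₁) h₂

/-- The degree `n` cocycles of `Hom(K, Y)`: the maps `K_n ⟶ Y` killed by precomposition with the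
differential `K_{n+1} ⟶ K_n`. -/
noncomputable abbrev cocyc (K : ChainComplex (ModuleCat.{u} R) ℕ) (n : ℕ) (Y : ModuleCat.{u} R) :
    Submodule R (K.X n ⟶ Y) :=
  LinearMap.ker (Linear.leftComp R Y (K.d (n + 1) n))

/-- The inclusion of the concrete cocycles into the categorical object of cycles; it is bijective by
`iCycles_cocycLift` and `cocycLift_surj`. -/
noncomputable def cocycLift (K : ChainComplex (ModuleCat.{u} R) ℕ) (n : ℕ) (Y : ModuleCat.{u} R) :
    ModuleCat.of R (cocyc K n Y) ⟶ (K.linearYonedaObj R Y).cycles n :=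
  (K.linearYonedaObj R Y).liftCycles (ModuleCat.ofHom (cocyc K n Y).subtype) (n + 1) (by simp)
    (ModuleCat.hom_ext (LinearMap.ext fun z => z.2))

lemma iCycles_cocycLift (K : ChainComplex (ModuleCat.{u} R) ℕ) (n : ℕ) (Y : ModuleCat.{u} R)
    (z : cocyc K n Y) : (K.linearYonedaObj R Y).iCycles n (cocycLift K n Y z) = z.1 := by
  have := HomologicalComplex.liftCycles_i (K.linearYonedaObj R Y)
    (ModuleCat.ofHom (cocyc K n Y).subtype) (n + 1) (by simp) (ModuleCat.hom_ext (LinearMap.ext fun z => z.2))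
  exact ConcreteCategory.congr_hom this z

lemma iCycles_inj (K : CochainComplex (ModuleCat.{u} R) ℕ) (n : ℕ) :
    Function.Injective (K.iCycles n) := (ModuleCat.mono_iff_injective _).1 inferInstance

lemma cocycLift_surj (K : ChainComplex (ModuleCat.{u} R) ℕ) (n : ℕ) (Y : ModuleCat.{u} R) :
    Function.Surjective (cocycLift K n Y) := by
  intro c
  have h := (K.linearYonedaObj R Y).iCycles_d n (n + 1)
  refine ⟨⟨(K.linearYonedaObj R Y).iCycles n c, ConcreteCategory.congr_hom h c⟩, ?_⟩
  apply iCycles_inj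
  rw [iCycles_cocycLift]

/-- The class of a cocycle on a projective resolution in the derived-functor `Ext R (ModuleCat R) n`. -/
noncomputable def oldMk {X : ModuleCat.{u} R} (P : ProjectiveResolution X) (n : ℕ) (Y : ModuleCat.{u} R) :
    cocyc P.complex n Y →ₗ[R] ((Ext R (ModuleCat.{u} R) n).obj (Opposite.op X)).obj Y :=
  (cocycLift P.complex n Y ≫ HomologicalComplex.homologyπ _ _ ≫ (P.isoExt n Y).inv).hom

lemma oldMk_surj {X : ModuleCat.{u} R} (P : ProjectiveResolution X) (n : ℕ) (Y : ModuleCat.{u} R) :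
    Function.Surjective (oldMk P n Y) := by
  have h2 : Function.Surjective (((P.complex.linearYonedaObj R Y)).homologyπ n ≫ (P.isoExt n Y).inv) :=
    (ModuleCat.epi_iff_surjective _).1 inferInstance
  exact h2.comp (cocycLift_surj _ _ _)

/-- The kernel of `oldMk` in positive degrees consists of the coboundaries. -/
lemma oldMk_eq_zero_iff {X : ModuleCat.{u} R} (P : ProjectiveResolution X) (n : ℕ) (Y : ModuleCat.{u} R)
    (z : cocyc P.complex (n + 1) Y) :
    oldMk P (n + 1) Y z = 0 ↔ ∃ g : P.complex.X n ⟶ Y, P.complex.d (n + 1) n ≫ g = z.1 := by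
  let K : CochainComplex (ModuleCat.{u} R) ℕ := P.complex.linearYonedaObj R Y
  have h1 : oldMk P (n + 1) Y z = 0 ↔ K.homologyπ (n + 1) (cocycLift P.complex (n + 1) Y z) = 0 := by
    have : Function.Injective (P.isoExt (R := R) (n + 1) Y).inv := (ModuleCat.mono_iff_injective _).1 inferInstance
    rw [← this.eq_iff, map_zero]
    rfl
  rw [h1]
  have hex : (ShortComplex.mk _ _ (K.toCycles_comp_homologyπ n (n + 1))).Exact :=
    ShortComplex.exact_of_g_is_cokernel _ (K.homologyIsCokernel n (n + 1) (by simp))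
  rw [ShortComplex.moduleCat_exact_iff] at hex
  constructor
  · intro h
    obtain ⟨g, hg⟩ := hex _ h
    refine ⟨g, ?_⟩
    have := congrArg (K.iCycles (n + 1)) hg
    rw [iCycles_cocycLift] at this
    rw [← this]
    exact (ConcreteCategory.congr_hom (K.toCycles_i n (n + 1)) g).symm
  · rintro ⟨g, hg⟩
    have : cocycLift P.complex (n + 1) Y z = K.toCycles n (n + 1) g := by
      apply iCycles_inj
      rw [iCycles_cocycLift, ← hg]
      exact (ConcreteCategory.congr_hom (K.toCycles_i n (n + 1)) g).symm
    rw [this]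
    exact ConcreteCategory.congr_hom (K.toCycles_comp_homologyπ n (n + 1)) g

/-- Pullback of cocycles along a chain map. -/
noncomputable def cocycMap {K L : ChainComplex (ModuleCat.{u} R) ℕ} (φ : K ⟶ L) (n : ℕ) (Y : ModuleCat.{u} R)
    (z : cocyc L n Y) : cocyc K n Y :=
  ⟨φ.f n ≫ z.1, by
    have := z.2
    simp only [LinearMap.mem_ker, Linear.leftComp_apply] at this ⊢
    rw [← φ.comm_assoc, this, comp_zero]⟩

lemma oldMk_naturality {X X' : ModuleCat.{u} R} (g : X' ⟶ X) (P' : ProjectiveResolution X')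
    (P : ProjectiveResolution X) (φ : P'.Hom P g) (n : ℕ) (Y : ModuleCat.{u} R)
    (z : cocyc P.complex n Y) :
    ((Ext R (ModuleCat.{u} R) n).map g.op).app Y (oldMk P n Y z) =
      oldMk P' n Y (cocycMap φ.hom n Y z) := by
  have h1 := isoExt_naturality g P' P φ n Y
  rw [← Iso.inv_comp_eq, ← Category.assoc, ← Iso.eq_comp_inv] at h1
  have h2 := ConcreteCategory.congr_hom h1 ((P.complex.linearYonedaObj R Y).homologyπ n (cocycLift P.complex n Y z))
  refine h2.trans ?_
  have h3 := ConcreteCategory.congr_hom (HomologicalComplex.homologyπ_naturality (yonMap φ.hom Y) n) (cocycLift P.complex n Y z)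
  have h4 : HomologicalComplex.cyclesMap (yonMap φ.hom Y) n (cocycLift P.complex n Y z) =
      cocycLift P'.complex n Y (cocycMap φ.hom n Y z) := by
    apply iCycles_inj
    rw [iCycles_cocycLift]
    refine (ConcreteCategory.congr_hom (HomologicalComplex.cyclesMap_i (yonMap φ.hom Y) n) (cocycLift P.complex n Y z)).trans ?_
    exact congrArg ((yonMap φ.hom Y).f n) (iCycles_cocycLift P.complex n Y z)
  refine (congrArg (P'.isoExt n Y).inv h3).trans ?_
  exact congrArg (fun x => (P'.isoExt n Y).inv ((P'.complex.linearYonedaObj R Y).homologyπ n x)) h4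

/-- The class of a cocycle on a projective resolution in `CategoryTheory.Abelian.Ext`. -/
noncomputable def newMk {X : ModuleCat.{u} R} (P : ProjectiveResolution X) (n : ℕ) (Y : ModuleCat.{u} R) :
    cocyc P.complex n Y →ₗ[R] Abelian.Ext X Y n where
  toFun z := P.extMk z.1 (n + 1) rfl z.2
  map_add' z w := (P.add_extMk _ _ _ _ _ _).symm
  map_smul' r z := by
    have h : P.complex.d (n + 1) n ≫ z.1 = 0 := z.2
    change P.extMk (r • z.1) (n + 1) rfl (by rw [Linear.comp_smul, h, smul_zero]) =
      r • P.extMk z.1 (n + 1) rfl h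
    rw [Abelian.Ext.smul_eq_comp_mk₀, P.extMk_comp_mk₀]
    congr 1

lemma newMk_surj {X : ModuleCat.{u} R} (P : ProjectiveResolution X) (n : ℕ) (Y : ModuleCat.{u} R) :
    Function.Surjective (newMk P n Y) := by
  intro e
  obtain ⟨f, hf, rfl⟩ := P.extMk_surjective e (n + 1) rfl
  exact ⟨⟨f, hf⟩, rfl⟩

lemma ker_oldMk {X : ModuleCat.{u} R} (P : ProjectiveResolution X) (n : ℕ) (Y : ModuleCat.{u} R) :
    LinearMap.ker (oldMk P (n + 1) Y) = LinearMap.ker (newMk P (n + 1) Y) := by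
  ext z
  rw [LinearMap.mem_ker, LinearMap.mem_ker, oldMk_eq_zero_iff]
  exact (P.extMk_eq_zero_iff z.1 (n + 2) rfl z.2 n rfl).symm

/-- The two versions of `Ext^(n+1)(X, Y)` are isomorphic: on a chosen projective resolution, `oldMk`
and `newMk` are surjections from the same module of cocycles with the same kernel. -/
noncomputable def extComparison (X : ModuleCat.{u} R) (n : ℕ) (Y : ModuleCat.{u} R) :
    ((Ext R (ModuleCat.{u} R) (n + 1)).obj (Opposite.op X)).obj Y ≃ₗ[R] Abelian.Ext X Y (n + 1) :=
  ((oldMk (projectiveResolution X) (n + 1) Y).quotKerEquivOfSurjective (oldMk_surj _ _ _)).symm ≪≫ₗ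
  Submodule.quotEquivOfEq _ _ (ker_oldMk _ _ _) ≪≫ₗ
  (newMk (projectiveResolution X) (n + 1) Y).quotKerEquivOfSurjective (newMk_surj _ _ _)

lemma extComparison_oldMk (X : ModuleCat.{u} R) (n : ℕ) (Y : ModuleCat.{u} R) (z) :
    extComparison X n Y (oldMk (projectiveResolution X) (n + 1) Y z) =
      newMk (projectiveResolution X) (n + 1) Y z := by
  have : ((oldMk (projectiveResolution X) (n + 1) Y).quotKerEquivOfSurjective (oldMk_surj _ _ _)).symm
    (oldMk (projectiveResolution X) (n + 1) Y z) = Submodule.Quotient.mk z := by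
    rw [LinearEquiv.symm_apply_eq]; rfl
  simp only [extComparison, LinearEquiv.trans_apply, this]
  rfl

lemma extComparison_naturality {X X' : ModuleCat.{u} R} (g : X' ⟶ X) (n : ℕ) (Y : ModuleCat.{u} R) (e) :
    extComparison X' n Y (((Ext R (ModuleCat.{u} R) (n + 1)).map g.op).app Y e) =
      (Abelian.Ext.mk₀ g).comp (extComparison X n Y e) (zero_add _) := by
  obtain ⟨z, rfl⟩ := oldMk_surj (projectiveResolution X) (n + 1) Y e
  let φ : (projectiveResolution X').Hom (projectiveResolution X) g :=
    ⟨ProjectiveResolution.lift g _ _,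
      (ProjectiveResolution.lift_commutes_zero g _ _).trans (by simp)⟩
  rw [oldMk_naturality g _ _ φ, extComparison_oldMk, extComparison_oldMk]
  exact (ProjectiveResolution.mk₀_comp_extMk z.1 (n + 2) rfl z.2 φ).symm

end bridge

/-! ### Projective dimension of quotients by regular sequences -/

section pd
variable {R : Type u} [CommRing R]

/-- Long exact sequence of `0 → M → M → M/xM → 0`: killing a regular element raises the projective
dimension by at most one. -/
lemma pd_quotSMulTop (M : ModuleCat.{u} R) (x : R) (hx : IsSMulRegular M x) (n : ℕ)
    (h : HasProjectiveDimensionLT M n) :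
    HasProjectiveDimensionLT (ModuleCat.of R (QuotSMulTop x M)) (n + 1) :=
  (IsSMulRegular.smulShortComplex_shortExact hx).hasProjectiveDimensionLT_X₃ n h
    (hasProjectiveDimensionLT_of_ge M n (n + 1) n.le_succ)

lemma pd_quot_regular (M : ModuleCat.{u} R) (n : ℕ) (h : HasProjectiveDimensionLT M n)
    (rs : List R) (reg : RingTheory.Sequence.IsWeaklyRegular M rs) :
    HasProjectiveDimensionLT (ModuleCat.of R (M ⧸ Ideal.ofList rs • (⊤ : Submodule R M)))
      (n + rs.length) := by
  induction rs generalizing M n with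
  | nil =>
    exact hasProjectiveDimensionLT_of_iso (Submodule.quotEquivOfEqBot (R := R) (M := M) _
      (by rw [Ideal.ofList_nil, Submodule.bot_smul])).symm.toModuleIso _
  | cons x rs ih =>
    rw [RingTheory.Sequence.isWeaklyRegular_cons_iff] at reg
    have h1 := ih (ModuleCat.of R (QuotSMulTop x M)) (n + 1) (pd_quotSMulTop M x reg.1 n h) reg.2
    have h2 := hasProjectiveDimensionLT_of_iso
      (Submodule.quotOfListConsSMulTopEquivQuotSMulTopInner M x rs).symm.toModuleIso (n + 1 + rs.length)
    have e : n + 1 + rs.length = n + (x :: rs).length := by simp; omega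
    rwa [e] at h2

lemma pd_quot_ideal (rs : List R) (reg : RingTheory.Sequence.IsWeaklyRegular R rs) :
    HasProjectiveDimensionLT (ModuleCat.of R (R ⧸ Ideal.ofList rs)) (rs.length + 1) := by
  have h1 := pd_quot_regular (ModuleCat.of R R) 1 inferInstance rs reg
  have h2 := hasProjectiveDimensionLT_of_iso
    (Submodule.quotEquivOfEq (Ideal.ofList rs • (⊤ : Submodule R R)) (Ideal.ofList rs)
      (by rw [smul_eq_mul, Ideal.mul_top])).toModuleIso (1 + rs.length)
  rwa [add_comm] at h2

end pd

/-! ### The Mayer–Vietoris sequence -/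

section mv
variable {R : Type u} [CommRing R]

/-- The Mayer–Vietoris sequence `R/(I ⊓ J) → R/I × R/J → R/(I ⊔ J)`, where the second map is the
difference of the two projections. -/
noncomputable def mvSeq (I J : Ideal R) : ShortComplex (ModuleCat.{u} R) :=
  ShortComplex.mk
    (X₁ := ModuleCat.of R (R ⧸ (I ⊓ J))) (X₂ := ModuleCat.of R ((R ⧸ I) × (R ⧸ J)))
    (X₃ := ModuleCat.of R (R ⧸ (I ⊔ J)))
    (ModuleCat.ofHom ((Submodule.factor inf_le_left).prod (Submodule.factor inf_le_right)))
    (ModuleCat.ofHom ((Submodule.factor (le_sup_left : I ≤ I ⊔ J)).coprod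
      (-Submodule.factor (le_sup_right : J ≤ I ⊔ J))))
    (by
      apply ModuleCat.hom_ext
      apply LinearMap.ext
      intro x
      obtain ⟨r, rfl⟩ := Submodule.Quotient.mk_surjective _ x
      change (Submodule.Quotient.mk r : R ⧸ (I ⊔ J)) + -Submodule.Quotient.mk r = 0
      exact add_neg_cancel _)

lemma mvSeq_shortExact (I J : Ideal R) : (mvSeq I J).ShortExact := by
  apply ModuleCat.shortComplex_shortExact
  · rintro ⟨a, b⟩
    constructor
    swap
    · rintro ⟨x, hx⟩
      rw [← hx]
      exact ConcreteCategory.congr_hom (mvSeq I J).zero x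
    intro h
    obtain ⟨r, rfl⟩ := Submodule.Quotient.mk_surjective _ a
    obtain ⟨s, rfl⟩ := Submodule.Quotient.mk_surjective _ b
    replace h : (Submodule.Quotient.mk r : R ⧸ (I ⊔ J)) + -Submodule.Quotient.mk s = 0 := h
    rw [add_neg_eq_zero, Submodule.Quotient.eq, Submodule.mem_sup] at h
    obtain ⟨i, hi, j, hj, hij⟩ := h
    refine ⟨Submodule.Quotient.mk (r - i), ?_⟩
    refine Prod.ext ((Submodule.Quotient.eq _).2 ?_) ((Submodule.Quotient.eq _).2 ?_)
    · simpa using hi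
    · have : r - i - s = j := by linear_combination -hij
      simpa [this] using hj
  · change Function.Injective ((Submodule.factor (inf_le_left : I ⊓ J ≤ I)).prod
      (Submodule.factor (inf_le_right : I ⊓ J ≤ J)))
    rw [← LinearMap.ker_eq_bot, LinearMap.ker_eq_bot']
    intro x hx
    obtain ⟨r, rfl⟩ := Submodule.Quotient.mk_surjective _ x
    have h1 := (Submodule.Quotient.mk_eq_zero I).1 (congrArg Prod.fst hx)
    have h2 := (Submodule.Quotient.mk_eq_zero J).1 (congrArg Prod.snd hx)
    exact (Submodule.Quotient.mk_eq_zero _).2 ⟨h1, h2⟩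
  · intro x
    obtain ⟨r, rfl⟩ := Submodule.Quotient.mk_surjective _ x
    refine ⟨(Submodule.Quotient.mk r, 0), ?_⟩
    change (Submodule.Quotient.mk r : R ⧸ (I ⊔ J)) + -Submodule.factor (le_sup_right : J ≤ I ⊔ J) 0 = _
    rw [map_zero, neg_zero, add_zero]

lemma pd_prod (M N : ModuleCat.{u} R) (n : ℕ) (hM : HasProjectiveDimensionLT M n)
    (hN : HasProjectiveDimensionLT N n) :
    HasProjectiveDimensionLT (ModuleCat.of R (M × N)) n :=
  hasProjectiveDimensionLT_of_iso (ModuleCat.biprodIsoProd M N) n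

/-- Functoriality of the Mayer–Vietoris sequence in the pair of ideals. The outer components are
written with `Submodule.mapQ`, as are the transition maps of `localCohomology.ringModIdeals`. -/
noncomputable def mvMap {I J I' J' : Ideal R} (hI : I ≤ I') (hJ : J ≤ J') :
    mvSeq I J ⟶ mvSeq I' J' where
  τ₁ := ModuleCat.ofHom (Submodule.mapQ _ _ LinearMap.id (inf_le_inf hI hJ))
  τ₂ := ModuleCat.ofHom ((Submodule.factor hI).prodMap (Submodule.factor hJ))
  τ₃ := ModuleCat.ofHom (Submodule.mapQ _ _ LinearMap.id (sup_le_sup hI hJ))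
  comm₁₂ := by
    apply ModuleCat.hom_ext
    apply LinearMap.ext
    intro x
    obtain ⟨r, rfl⟩ := Submodule.Quotient.mk_surjective _ x
    rfl
  comm₂₃ := by
    apply ModuleCat.hom_ext
    apply LinearMap.ext
    rintro ⟨x, y⟩
    obtain ⟨r, rfl⟩ := Submodule.Quotient.mk_surjective _ x
    obtain ⟨s, rfl⟩ := Submodule.Quotient.mk_surjective _ y
    rfl

open Abelian

/-- The connecting map `Ext^n(R/(I ⊓ J), Y) → Ext^(n+1)(R/(I ⊔ J), Y)` of the Mayer–Vietoris
sequence. -/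
noncomputable def mvDelta (I J : Ideal R) (Y : ModuleCat.{u} R) (n : ℕ) :
    Ext (ModuleCat.of R (R ⧸ (I ⊓ J))) Y n →ₗ[R] Ext (ModuleCat.of R (R ⧸ (I ⊔ J))) Y (n + 1) :=
  (mvSeq_shortExact I J).extClass.precompOfLinear R Y (add_comm 1 n)

lemma mvDelta_apply (I J : Ideal R) (Y : ModuleCat.{u} R) (n : ℕ) (e) : mvDelta I J Y n e =
  (mvSeq_shortExact I J).extClass.comp e (add_comm 1 n) := rfl

/-- The connecting map is bijective in degree `n` when `R/I` and `R/J` have projective dimension less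
than `n`, since then `Ext^n` and `Ext^(n+1)` of the middle term vanish. -/
lemma mvDelta_bijective (I J : Ideal R) (Y : ModuleCat.{u} R) (n : ℕ)
    (hI : HasProjectiveDimensionLT (ModuleCat.of R (R ⧸ I)) n)
    (hJ : HasProjectiveDimensionLT (ModuleCat.of R (R ⧸ J)) n) :
    Function.Bijective (mvDelta I J Y n) := by
  have hS := mvSeq_shortExact I J
  have h₂ : HasProjectiveDimensionLT (mvSeq I J).X₂ n := pd_prod _ _ n hI hJ
  constructor
  · rw [← LinearMap.ker_eq_bot, LinearMap.ker_eq_bot']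
    intro e he
    obtain ⟨e', rfl⟩ := Ext.contravariant_sequence_exact₁ hS Y e (add_comm 1 n) he
    rw [Ext.eq_zero_of_hasProjectiveDimensionLT e' n le_rfl]
    exact (Ext.mk₀ (mvSeq I J).f).comp_zero _ _ _ (zero_add n)
  · intro e
    exact Ext.contravariant_sequence_exact₃ hS Y e
      (Ext.eq_zero_of_hasProjectiveDimensionLT _ n n.le_succ) (add_comm 1 n)

lemma mvDelta_naturality {I J I' J' : Ideal R} (hI : I ≤ I') (hJ : J ≤ J') (Y : ModuleCat.{u} R)
    (n : ℕ) (e) :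
    mvDelta I J Y n ((Ext.mk₀ (mvMap hI hJ).τ₁).comp e (zero_add n)) =
      (Ext.mk₀ (mvMap hI hJ).τ₃).comp (mvDelta I' J' Y n e) (zero_add _) := by
  have h := ShortComplex.ShortExact.extClass_naturality (mvSeq_shortExact I J)
    (mvSeq_shortExact I' J') (mvMap hI hJ)
  have h' := congrArg (fun z => z.comp e (add_comm 1 n)) h
  refine Eq.trans ?_ (h'.trans ?_)
  · exact (Ext.comp_assoc _ _ _ _ _ (by omega)).symm
  · exact (Ext.comp_assoc _ _ _ _ (add_comm 1 n) (by omega))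

end mv

/-! ### Local cohomology along a decreasing sequence of ideals -/

section cofinal
variable {R : Type u} [CommRing R]
open Opposite localCohomology

/-- The inverse system of ideals attached to a decreasing sequence. -/
def seqDiagram (F : ℕ → Ideal R) (hF : Antitone F) : ℕᵒᵖ ⥤ Ideal R where
  obj t := F t.unop
  map w := homOfLE (hF (leOfHom w.unop))

/-- A decreasing sequence of ideals whose radicals contain `J`, as a diagram in the category of all
such ideals. -/
def seqLift (F : ℕ → Ideal R) (hF : Antitone F) (J : Ideal R) (hJ : ∀ t, J ≤ (F t).radical) :
    ℕᵒᵖ ⥤ SelfLERadical J :=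
  ObjectProperty.lift _ (seqDiagram F hF) fun t => hJ t.unop

/-- A decreasing sequence that gets below every power of `J` is cofinal among all ideals whose radical
contains `J`. -/
lemma seqLift_initial (F : ℕ → Ideal R) (hF : Antitone F) (J : Ideal R)
    (hJ : ∀ t, J ≤ (F t).radical) (hc : ∀ n, ∃ t, F t ≤ J ^ n) (hfg : J.FG) :
    (seqLift F hF J hJ).Initial where
  out J' := by
    have : Nonempty (CostructuredArrow (seqLift F hF J hJ) J') := by
      obtain ⟨n, hn⟩ := Ideal.exists_pow_le_of_le_radical_of_fg J'.2 hfg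
      obtain ⟨t, ht⟩ := hc n
      exact ⟨CostructuredArrow.mk (⟨⟨⟨ht.trans hn⟩⟩⟩ : (seqLift F hF J hJ).obj (op t) ⟶ J')⟩
    -- Two terms of the sequence contained in the same ideal are compared by their indices.
    refine zigzag_isConnected fun j1 j2 => Relation.ReflTransGen.single ?_
    rcases le_total (unop j1.left) (unop j2.left) with h | h
    · right; exact ⟨CostructuredArrow.homMk (homOfLE h).op rfl⟩
    · left; exact ⟨CostructuredArrow.homMk (homOfLE h).op rfl⟩

/-- Local cohomology with support in `J` is the colimit of `Ext^i(R/F_t, -)` along any sequence `F`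
cofinal with the powers of `J`. -/
noncomputable def seqIso (F : ℕ → Ideal R) (hF : Antitone F) (J : Ideal R)
    (hJ : ∀ t, J ≤ (F t).radical) (hc : ∀ n, ∃ t, F t ≤ J ^ n) [IsNoetherian R R] (i : ℕ) :
    localCohomology.{u} J i ≅ colimit (diagram (seqDiagram F hF) i) :=
  haveI := seqLift_initial F hF J hJ hc (isNoetherian_def.mp inferInstance J)
  (isoSelfLERadical J i).symm ≪≫
    (localCohomology.isoOfFinal.{u, u, 0} (seqLift F hF J hJ) (selfLERadicalDiagram.{u} J) i).symm ≪≫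
      HasColimit.isoOfNatIso.{0, 0, u + 1, u + 1} (Iso.refl.{u + 1, u + 1} _)

/-- The evaluation of `seqIso` at a module `Y`; colimits of functors are computed pointwise. -/
noncomputable def seqIsoObj (F : ℕ → Ideal R) (hF : Antitone F) (J : Ideal R)
    (hJ : ∀ t, J ≤ (F t).radical) (hc : ∀ n, ∃ t, F t ≤ J ^ n) [IsNoetherian R R] (i : ℕ)
    (Y : ModuleCat.{u} R) :
    (localCohomology.{u} J i).obj Y ≅
      colimit (diagram (seqDiagram F hF) i ⋙ (evaluation _ _).obj Y) :=
  (seqIso F hF J hJ hc i).app Y ≪≫ colimitObjIsoColimitCompEvaluation _ _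

/-- The Mayer–Vietoris connecting isomorphism, transported to the derived-functor version of Ext. -/
noncomputable def levelIso (I J : Ideal R) (Y : ModuleCat.{u} R) (n : ℕ)
    (hI : HasProjectiveDimensionLT (ModuleCat.of R (R ⧸ I)) (n + 1))
    (hJ : HasProjectiveDimensionLT (ModuleCat.of R (R ⧸ J)) (n + 1)) :
    ((Ext R (ModuleCat.{u} R) (n + 1)).obj (op (ModuleCat.of R (R ⧸ (I ⊓ J))))).obj Y ≃ₗ[R]
    ((Ext R (ModuleCat.{u} R) (n + 2)).obj (op (ModuleCat.of R (R ⧸ (I ⊔ J))))).obj Y :=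
  extComparison _ n Y ≪≫ₗ LinearEquiv.ofBijective _ (mvDelta_bijective I J Y (n + 1) hI hJ) ≪≫ₗ
    (extComparison _ (n + 1) Y).symm

/-- The connecting isomorphisms `levelIso` are compatible with the transition maps. -/
noncomputable def diagramIso (I J : ℕ → Ideal R) (hI : Antitone I) (hJ : Antitone J)
    (Y : ModuleCat.{u} R) (n : ℕ)
    (pI : ∀ t, HasProjectiveDimensionLT (ModuleCat.of R (R ⧸ I t)) (n + 1))
    (pJ : ∀ t, HasProjectiveDimensionLT (ModuleCat.of R (R ⧸ J t)) (n + 1)) :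
    diagram (seqDiagram (fun t => I t ⊓ J t) (fun _ _ h => inf_le_inf (hI h) (hJ h))) (n + 1) ⋙
        (evaluation _ _).obj Y ≅
      diagram (seqDiagram (fun t => I t ⊔ J t) (fun _ _ h => sup_le_sup (hI h) (hJ h))) (n + 2) ⋙
        (evaluation _ _).obj Y :=
  NatIso.ofComponents (fun t => (levelIso _ _ Y n (pI t.unop.unop) (pJ t.unop.unop)).toModuleIso)
    (by
      intro s t f
      apply ModuleCat.hom_ext
      apply LinearMap.ext
      intro x
      have hI' := hI (leOfHom f.unop.unop)
      have hJ' := hJ (leOfHom f.unop.unop)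
      -- After applying the comparison to the target, the square is pasted from naturality of the
      -- comparison for `sup` and for `inf` around naturality of the connecting map.
      apply (extComparison _ (n + 1) Y).injective
      refine ((extComparison _ (n + 1) Y).apply_symm_apply _).trans ?_
      refine Eq.trans ?_ (extComparison_naturality (mvMap hI' hJ').τ₃ (n + 1) Y _).symm
      refine Eq.trans ?_ (congrArg (fun z => (Abelian.Ext.mk₀ (mvMap hI' hJ').τ₃).comp z (zero_add (n + 2)))
        ((extComparison _ (n + 1) Y).apply_symm_apply _).symm)
      refine Eq.trans ?_ (mvDelta_naturality hI' hJ' Y (n + 1) _)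
      exact congrArg (mvDelta _ _ Y (n + 1))
        (extComparison_naturality (mvMap hI' hJ').τ₁ n Y x))

/-- If `R/I_t` and `R/J_t` have projective dimension at most `n`, and `I_t ⊓ J_t`, `I_t ⊔ J_t` are
cofinal with the powers of `B`, `m`, then `H^(n+1)_B(Y) ≅ H^(n+2)_m(Y)`. -/
theorem mayerVietoris (I J : ℕ → Ideal R) (hI : Antitone I) (hJ : Antitone J) [IsNoetherian R R]
    (Y : ModuleCat.{u} R) (n : ℕ) (B m : Ideal R)
    (pI : ∀ t, HasProjectiveDimensionLT (ModuleCat.of R (R ⧸ I t)) (n + 1))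
    (pJ : ∀ t, HasProjectiveDimensionLT (ModuleCat.of R (R ⧸ J t)) (n + 1))
    (hB : ∀ t, B ≤ (I t ⊓ J t).radical) (hB' : ∀ n, ∃ t, I t ⊓ J t ≤ B ^ n)
    (hm : ∀ t, m ≤ (I t ⊔ J t).radical) (hm' : ∀ n, ∃ t, I t ⊔ J t ≤ m ^ n) :
    Nonempty ((localCohomology B (n + 1)).obj Y ≃ₗ[R] (localCohomology m (n + 2)).obj Y) :=
  ⟨(seqIsoObj _ (fun _ _ h => inf_le_inf (hI h) (hJ h)) B hB hB' (n + 1) Y ≪≫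
    HasColimit.isoOfNatIso (diagramIso I J hI hJ Y n pI pJ) ≪≫
    (seqIsoObj _ (fun _ _ h => sup_le_sup (hI h) (hJ h)) m hm hm' (n + 2) Y).symm).toLinearEquiv⟩

end cofinal

end generalities

/-! ### The ideals of powers of two variables -/

section poly
open MvPolynomial
variable {k : Type} [Field k]

/-- The ideal `(X_i^t, X_j^t)`, generated by a list so as to fit the API of regular sequences. -/
noncomputable def powIdeal (k : Type) [Field k] (i j : Fin 4) (t : ℕ) : Ideal (polyR k) :=
  Ideal.ofList [X i ^ t, X j ^ t]

lemma powIdeal_le_iff (i j : Fin 4) (t : ℕ) (K : Ideal (polyR k)) :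
    powIdeal k i j t ≤ K ↔ X i ^ t ∈ K ∧ X j ^ t ∈ K := by
  simp [powIdeal, Ideal.ofList, Ideal.span_le, Set.subset_def]

lemma mem_powIdeal (i j : Fin 4) (t : ℕ) :
    X i ^ t ∈ powIdeal k i j t ∧ X j ^ t ∈ powIdeal k i j t :=
  (powIdeal_le_iff i j t _).1 le_rfl

lemma powIdeal_antitone (i j : Fin 4) : Antitone (powIdeal k i j) := fun s t h =>
  (powIdeal_le_iff i j t _).2
    ⟨Ideal.mem_of_dvd _ (pow_dvd_pow _ h) (mem_powIdeal i j s).1,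
      Ideal.mem_of_dvd _ (pow_dvd_pow _ h) (mem_powIdeal i j s).2⟩

lemma powIdeal_le_pow (i j : Fin 4) (t : ℕ) :
    powIdeal k i j t ≤ (Ideal.span {X i, X j} : Ideal (polyR k)) ^ t :=
  (powIdeal_le_iff i j t _).2
    ⟨Ideal.pow_mem_pow (Ideal.subset_span (by simp)) t,
      Ideal.pow_mem_pow (Ideal.subset_span (by simp)) t⟩

lemma span_le_radical_powIdeal (i j : Fin 4) (t : ℕ) :
    (Ideal.span {X i, X j} : Ideal (polyR k)) ≤ (powIdeal k i j t).radical := by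
  rw [Ideal.span_le]
  rintro x (rfl | rfl)
  · exact ⟨t, (mem_powIdeal i j t).1⟩
  · exact ⟨t, (mem_powIdeal i j t).2⟩

lemma isWeaklyRegular_pow (i j : Fin 4) (hij : i ≠ j) (t : ℕ) :
    RingTheory.Sequence.IsWeaklyRegular (polyR k) [(X i : polyR k) ^ t, X j ^ t] := by
  rw [RingTheory.Sequence.isWeaklyRegular_cons_iff, RingTheory.Sequence.isWeaklyRegular_cons_iff]
  refine ⟨?_, ?_, RingTheory.Sequence.IsWeaklyRegular.nil _ _⟩
  · exact IsSMulRegular.of_ne_zero (pow_ne_zero t (X_ne_zero i))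
  · rw [isSMulRegular_iff_right_eq_zero_of_smul]
    intro x hx
    obtain ⟨f, rfl⟩ := Submodule.Quotient.mk_surjective _ x
    rw [← Submodule.Quotient.mk_smul, Submodule.Quotient.mk_eq_zero,
      Submodule.mem_smul_pointwise_iff_exists] at hx
    obtain ⟨g, -, hg⟩ := hx
    have h : (X i : polyR k) ^ t ∣ f :=
      (X_prime (i := i)).pow_dvd_of_dvd_mul_left t
        (fun h => hij (X_dvd_X.1 ((X_prime (i := i)).dvd_of_dvd_pow h))) ⟨g, by simpa using hg.symm⟩
    obtain ⟨c, rfl⟩ := h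
    rw [Submodule.Quotient.mk_eq_zero]
    exact Submodule.smul_mem_pointwise_smul c _ _ trivial

lemma pd_powIdeal (i j : Fin 4) (hij : i ≠ j) (t : ℕ) :
    CategoryTheory.HasProjectiveDimensionLT
      (ModuleCat.of (polyR k) (polyR k ⧸ powIdeal k i j t)) 3 :=
  pd_quot_ideal _ (isWeaklyRegular_pow i j hij t)

/-- By Artin–Rees, `a^(n+c) ⊓ b^n ≤ a^n * b^n` for a suitable `c`. -/
lemma exists_inf_le_mul_pow {S : Type*} [CommRing S] [IsNoetherianRing S] (a b : Ideal S) (n : ℕ) :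
    ∃ t, a ^ t ⊓ b ^ t ≤ (a * b) ^ n := by
  obtain ⟨c, hc⟩ := Ideal.exists_pow_inf_eq_pow_smul a (b ^ n : Submodule S S)
  refine ⟨n + c, ?_⟩
  have h := hc (n + c) (Nat.le_add_left c n)
  rw [Nat.add_sub_cancel, smul_eq_mul, Ideal.mul_top] at h
  refine (inf_le_inf_left _ (Ideal.pow_le_pow_right (Nat.le_add_right n c))).trans ?_
  rw [h, mul_pow]
  exact Ideal.mul_mono_right inf_le_right

end poly

/-- There is an isomorphism of `R`-modules `H³_B(R) ≅ H⁴_m(R)`. -/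
theorem localCohomology_three_B_iso (k : Type) [Field k] :
    Nonempty
      (((localCohomology (idealB k) 3).obj (ModuleCat.of (polyR k) (polyR k))) ≃ₗ[polyR k]
        ((localCohomology (idealM k) 4).obj (ModuleCat.of (polyR k) (polyR k)))) := by
  refine mayerVietoris (powIdeal k 0 1) (powIdeal k 2 3) (powIdeal_antitone 0 1)
    (powIdeal_antitone 2 3) _ 2 _ _ (pd_powIdeal 0 1 (by decide)) (pd_powIdeal 2 3 (by decide))
    (fun t => ?_) (fun n => ?_) (fun t => ?_) (fun n => ?_)
  · rw [Ideal.radical_inf]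
    exact Ideal.mul_le_inf.trans
      (inf_le_inf (span_le_radical_powIdeal 0 1 t) (span_le_radical_powIdeal 2 3 t))
  · obtain ⟨t, ht⟩ := exists_inf_le_mul_pow (idealA1 k) (idealA2 k) n
    exact ⟨t, (inf_le_inf (powIdeal_le_pow 0 1 t) (powIdeal_le_pow 2 3 t)).trans ht⟩
  · exact sup_le ((span_le_radical_powIdeal 0 1 t).trans (Ideal.radical_mono le_sup_left))
      ((span_le_radical_powIdeal 2 3 t).trans (Ideal.radical_mono le_sup_right))
  · exact ⟨n, sup_le ((powIdeal_le_pow 0 1 n).trans (Ideal.pow_right_mono le_sup_left n))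
      ((powIdeal_le_pow 2 3 n).trans (Ideal.pow_right_mono le_sup_right n))⟩
end

section
/- Let k be a field, R = k[x₁,x₂,y₁,y₂], a₁ = (x₁,x₂), a₂ = (y₁,y₂), and B = a₁·a₂. Then both local cohomology modules H^2_B(R) and H^3_B(R) are nonzero. -/
/-!
Write `I_t = (x₁ ^ t, x₂ ^ t) * (y₁ ^ t, y₂ ^ t)`. Then `I_t ⊆ B ^ t` and `I_1 = B`. Since `H^n_B(R)`
is the filtered colimit of `Ext^n(R/B^t, R)`, a class in `Ext^n(R/B, R)` whose restriction to
`Ext^n(R/I_t, R)` is nonzero for every `t ≥ 1` stays nonzero in `H^n_B(R)`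
(`nontrivial_localCohomology`).

For suitable elements `a, b, c, d`, the quotient by `(a, b) * (c, d)` has the free resolution
`0 → R → R⁴ → R⁴ → R` of `GoodQuad.resolution`, whose last differential has entries
`d, -c, -b, a`. Replacing the elements by multiples `p₁ a, p₂ b, q₁ c, q₂ d` gives a second such
resolution, and `compareMap`, diagonal in each degree, lifts the projection of the quotients.

* In degree three, the class of the identity of `R` restricts to the class of multiplication by
  `p₁ p₂ q₁ q₂`. With all multipliers `t`-th powers of the variables, it is nonzero because
  `(x₁ x₂ y₁ y₂) ^ t ∉ (x₁ ^ (t+1), x₂ ^ (t+1), y₁ ^ (t+1), y₂ ^ (t+1))`.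
* In degree two, the cocycle `(c, d, 0, 0)` on `R⁴` restricts to a functional with first coordinate
  `p₁ p₂ q₁ c`, while the first coordinates of coboundaries lie in `(p₁ a, p₂ b)`. The class is
  nonzero because `(x₁ x₂) ^ t y₁ ^ (t+1) ∉ (x₁ ^ (t+1), x₂ ^ (t+1))`.

Both non-memberships are instances of `monomial_notMem`, and the two classes are provided by
`exists_class_three` and `exists_class_two`.
-/

open MvPolynomial

section
open CategoryTheory Opposite Limits

/-! ### Nonzero Ext classes and nonvanishing of local cohomology -/

/-- A cocycle `α` on a projective resolution `Q` of `Z'` defines a class in `Ext^n(Z', Y)`. Its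
restriction along `f : Z ⟶ Z'` is represented by `φ_n ≫ α`, where `φ` lifts `f` to a resolution
`P` of `Z`; it is nonzero as soon as some linear functional `ε` on `Hom(P_n, Y)` vanishes on
coboundaries but not on `φ_n ≫ α`. The `Ext` groups are left derived functors of `Hom(-, Y)` with
values in the opposite category, so evaluating a functional on a homology class becomes a
morphism out of `op T`. -/
lemma exists_extClass {R : Type} [CommRing R] {Z' Y : ModuleCat.{0} R}
    (Q : ProjectiveResolution Z') (n : ℕ) (α : Q.complex.X n ⟶ Y)
    (hα : Q.complex.d (n + 1) n ≫ α = 0) :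
    ∃ c : ((Ext R (ModuleCat.{0} R) n).obj (op Z')).obj Y,
      ∀ {Z : ModuleCat.{0} R} (P : ProjectiveResolution Z) (f : Z ⟶ Z')
        (φ : P.complex ⟶ Q.complex), φ.f 0 ≫ Q.π.f 0 = P.π.f 0 ≫ f →
        ∀ {T : ModuleCat.{0} R} (ε : (P.complex.X n ⟶ Y) →ₗ[R] T),
        (∀ (m : ℕ) (ψ : P.complex.X m ⟶ Y), ε (P.complex.d n m ≫ ψ) = 0) →
        ε (φ.f n ≫ α) ≠ 0 →
        (((Ext R (ModuleCat.{0} R) n).map f.op).app Y) c ≠ 0 := by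
  let F : ModuleCat.{0} R ⥤ (ModuleCat.{0} R)ᵒᵖ :=
    ((linearYoneda R (ModuleCat.{0} R)).obj Y).rightOp
  let KQ := (F.mapHomologicalComplex (ComplexShape.down ℕ)).obj Q.complex
  let α' : KQ.X n ⟶ op (ModuleCat.of R R) :=
    (ModuleCat.ofHom (LinearMap.toSpanSingleton R (Q.complex.X n ⟶ Y) α)).op
  have hα' : KQ.d (n + 1) n ≫ α' = 0 := by
    apply Quiver.Hom.unop_inj
    ext
    change Q.complex.d (n + 1) n ≫ ((1 : R) • α) = 0
    rw [one_smul, hα]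
  -- In the opposite category, an element of `Ext^n(Z', Y)` is a morphism from the derived functor
  -- to `op R`; `κ` is the one that corresponds to the class of `α`.
  let κ : (F.leftDerived n).obj Z' ⟶ op (ModuleCat.of R R) :=
    (Q.isoLeftDerivedObj F n).hom ≫ KQ.homologyι n ≫ KQ.descOpcycles α' (n + 1) (by simp) hα'
  refine ⟨κ.unop (1 : R), ?_⟩
  intro Z P f φ comm T ε hε hne h0
  apply hne
  let KP := (F.mapHomologicalComplex (ComplexShape.down ℕ)).obj P.complex
  let φ' : KP ⟶ KQ := (F.mapHomologicalComplex (ComplexShape.down ℕ)).map φ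
  have h1 : (F.leftDerived n).map f ≫ κ = 0 := by
    apply Quiver.Hom.unop_inj
    ext
    exact h0
  have hnat := ProjectiveResolution.isoLeftDerivedObj_hom_naturality f P Q φ comm F n
  have h2 : (P.isoLeftDerivedObj F n).hom ≫ HomologicalComplex.homologyMap φ' n ≫
      KQ.homologyι n ≫ KQ.descOpcycles α' (n + 1) (by simp) hα' = 0 := by
    rw [← h1]
    simp only [κ]
    rw [← Category.assoc ((F.leftDerived n).map f), hnat, Category.assoc]
    rfl
  rw [← cancel_epi (P.isoLeftDerivedObj F n).inv, Iso.inv_hom_id_assoc, comp_zero] at h2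
  let β : op T ⟶ KP.X n := (ModuleCat.ofHom ε).op
  have hβ : β ≫ KP.d n ((ComplexShape.down ℕ).next n) = 0 := by
    apply Quiver.Hom.unop_inj
    ext ψ
    exact hε _ ψ
  have h3 : β ≫ φ'.f n ≫ α' = 0 := by
    have h4 : HomologicalComplex.homologyMap φ' n ≫
        KQ.homologyι n ≫ KQ.descOpcycles α' (n + 1) (by simp) hα' = 0 := h2
    have h5 : KP.liftCycles β _ rfl hβ ≫ KP.homologyπ n ≫ HomologicalComplex.homologyMap φ' n ≫
        KQ.homologyι n ≫ KQ.descOpcycles α' (n + 1) (by simp) hα' = 0 := by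
      rw [h4, comp_zero, comp_zero]
    rw [HomologicalComplex.homologyπ_naturality_assoc, HomologicalComplex.homology_π_ι_assoc,
      HomologicalComplex.p_descOpcycles, HomologicalComplex.cyclesMap_i_assoc,
      HomologicalComplex.liftCycles_i_assoc] at h5
    exact h5
  have h5 := congrArg (fun t => t.unop (1 : R)) h3
  have h6 : ε (φ.f n ≫ ((1 : R) • α)) = 0 := h5
  rwa [one_smul] at h6

/-- `H^n_J(M)` is the filtered colimit of the modules `Ext^n(R/J^t, M)`. If `I t ⊆ J ^ t` for
all `t`, a class in `Ext^n(R/J, M)` whose restriction to every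
`Ext^n(R/I (t + 1), M)` is nonzero cannot die at any finite stage, hence is nonzero in the
colimit. -/
lemma nontrivial_localCohomology {R : Type} [CommRing R] (J : Ideal R) (n : ℕ)
    (M : ModuleCat.{0} R)
    (c : ((Ext R (ModuleCat.{0} R) n).obj (op (ModuleCat.of R (R ⧸ J)))).obj M)
    (I : ℕ → Ideal R) (hI : ∀ t, I t ≤ J ^ t) (hIJ : ∀ t, I (t + 1) ≤ J)
    (hc : ∀ t, (((Ext R (ModuleCat.{0} R) n).map
      (ModuleCat.ofHom (Submodule.mapQ (I (t + 1)) J LinearMap.id (hIJ t))).op).app M) c ≠ 0) :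
    Nontrivial ((localCohomology J n).obj M) := by
  by_contra hnt
  rw [not_nontrivial_iff_subsingleton] at hnt
  let D := localCohomology.diagram (localCohomology.idealPowersDiagram J) n
  let D' := D ⋙ (evaluation _ _).obj M
  let hcol := isColimitOfPreserves ((evaluation (ModuleCat.{0} R) (ModuleCat.{0} R)).obj M)
    (colimit.isColimit D)
  let g : ModuleCat.of R (R ⧸ J ^ 1) ⟶ ModuleCat.of R (R ⧸ J) :=
    ModuleCat.ofHom (Submodule.mapQ _ _ LinearMap.id (by simp))
  let c' : D'.obj (op (op 1)) := ((Ext R (ModuleCat.{0} R) n).map g.op).app M c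
  -- If the colimit is trivial, `c'` already becomes zero at some stage `R ⧸ J ^ j`.
  obtain ⟨j, u, v, huv⟩ := Concrete.isColimit_exists_of_rep_eq D' hcol c' (0 : D'.obj (op (op 1)))
    (by
      have : Subsingleton ((((evaluation (ModuleCat.{0} R) (ModuleCat.{0} R)).obj M).mapCocone
        (colimit.cocone D)).pt) := hnt
      exact this.elim _ _)
  rw [map_zero] at huv
  obtain ⟨t, ht⟩ : ∃ t, t + 1 = j.unop.unop :=
    ⟨j.unop.unop - 1, Nat.sub_add_cancel u.unop.unop.down.down⟩
  have hle : I (t + 1) ≤ J ^ j.unop.unop := ht ▸ hI (t + 1)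
  let r : ModuleCat.of R (R ⧸ I (t + 1)) ⟶ ModuleCat.of R (R ⧸ J ^ j.unop.unop) :=
    ModuleCat.ofHom (Submodule.mapQ _ _ LinearMap.id hle)
  apply hc t
  have h2 := congrArg (((Ext R (ModuleCat.{0} R) n).map r.op).app M) huv
  refine Eq.trans ?_ (h2.trans (map_zero _))
  let w : ModuleCat.of R (R ⧸ J ^ j.unop.unop) ⟶ ModuleCat.of R (R ⧸ J ^ 1) :=
    (localCohomology.ringModIdeals (localCohomology.idealPowersDiagram J)).map u.unop
  have hfac : ModuleCat.ofHom (Submodule.mapQ (I (t + 1)) J LinearMap.id (hIJ t)) =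
      r ≫ w ≫ g := by
    ext
    rfl
  rw [hfac, op_comp, op_comp, Functor.map_comp, Functor.map_comp]
  rfl

/-! ### A free resolution of the quotient by `(a, b) * (c, d)` -/

section
variable {R : Type} [CommRing R] (a b c d : R)

/-- The first differential `R⁴ → R`, sending the basis `e₁₁, e₁₂, e₂₁, e₂₂` to the generators
`ac, ad, bc, bd` of `(a, b) * (c, d)`. -/
def bdry₁ : R × R × R × R →ₗ[R] R where
  toFun w := w.1 * (a * c) + w.2.1 * (a * d) + w.2.2.1 * (b * c) + w.2.2.2 * (b * d)
  map_add' _ _ := by simp only [Prod.fst_add, Prod.snd_add]; ring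
  map_smul' _ _ := by simp only [Prod.smul_fst, Prod.smul_snd, smul_eq_mul, RingHom.id_apply]; ring

/-- The second differential `R⁴ → R⁴`. The basis `f₁, f₂, g₁, g₂` is sent to the syzygies
`b e₁ⱼ - a e₂ⱼ` (for `fⱼ`) and `d eᵢ₁ - c eᵢ₂` (for `gᵢ`). -/
def bdry₂ : R × R × R × R →ₗ[R] R × R × R × R where
  toFun u := (b * u.1 + d * u.2.2.1, b * u.2.1 - c * u.2.2.1,
    -(a * u.1) + d * u.2.2.2, -(a * u.2.1) - c * u.2.2.2)
  map_add' _ _ := by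
    simp only [Prod.fst_add, Prod.snd_add, Prod.mk_add_mk, Prod.mk.injEq]
    refine ⟨?_, ?_, ?_, ?_⟩ <;> ring
  map_smul' _ _ := by
    simp only [Prod.smul_fst, Prod.smul_snd, smul_eq_mul, RingHom.id_apply, Prod.smul_mk,
      Prod.mk.injEq]
    refine ⟨?_, ?_, ?_, ?_⟩ <;> ring

/-- The third differential `R → R⁴`, sending `1` to `d f₁ - c f₂ - b g₁ + a g₂`. -/
def bdry₃ : R →ₗ[R] R × R × R × R where
  toFun r := (d * r, -(c * r), -(b * r), a * r)
  map_add' _ _ := by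
    simp only [Prod.mk_add_mk, Prod.mk.injEq]
    refine ⟨?_, ?_, ?_, ?_⟩ <;> ring
  map_smul' _ _ := by
    simp only [smul_eq_mul, RingHom.id_apply, Prod.smul_mk, Prod.mk.injEq]
    refine ⟨?_, ?_, ?_, ?_⟩ <;> ring

variable (R) in
/-- The terms `R, R⁴, R⁴, R, 0, 0, …` of the resolution. -/
abbrev resX : ℕ → ModuleCat.{0} R
  | 0 => ModuleCat.of R R
  | 1 => ModuleCat.of R (R × R × R × R)
  | 2 => ModuleCat.of R (R × R × R × R)
  | 3 => ModuleCat.of R R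
  | _ + 4 => ModuleCat.of R PUnit

/-- The differentials of the resolution, zero in degrees above three. -/
def resD : ∀ n, resX R (n + 1) ⟶ resX R n
  | 0 => ModuleCat.ofHom (bdry₁ a b c d)
  | 1 => ModuleCat.ofHom (bdry₂ a b c d)
  | 2 => ModuleCat.ofHom (bdry₃ a b c d)
  | _ + 3 => 0

lemma resD_comp (n : ℕ) : resD a b c d (n + 1) ≫ resD a b c d n = 0 := by
  match n with
  | 0 =>
    refine ModuleCat.hom_ext (LinearMap.ext fun u => ?_)
    change bdry₁ a b c d (bdry₂ a b c d u) = 0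
    simp only [bdry₁, bdry₂, LinearMap.coe_mk, AddHom.coe_mk]
    ring
  | 1 =>
    refine ModuleCat.hom_ext (LinearMap.ext fun (r : R) => ?_)
    change bdry₂ a b c d (bdry₃ a b c d r) = 0
    simp only [bdry₃, bdry₂, LinearMap.coe_mk, AddHom.coe_mk, Prod.mk_eq_zero]
    refine ⟨?_, ?_, ?_, ?_⟩ <;> ring
  | _ + 2 => exact zero_comp

/-- The complex `0 → R → R⁴ → R⁴ → R` with differentials `bdry₃, bdry₂, bdry₁`. -/
abbrev resComplex : ChainComplex (ModuleCat.{0} R) ℕ :=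
  ChainComplex.of (resX R) (resD a b c d) (resD_comp a b c d)

lemma resComplex_d (n : ℕ) : (resComplex a b c d).d (n + 1) n = resD a b c d n :=
  ChainComplex.of_d (resX R) (resD a b c d) n

/-- The regularity conditions on `a, b, c, d` that make `resComplex a b c d` acyclic in positive
degrees, written elementwise: `d` and `b` are nonzerodivisors, `b` and `c` are regular modulo `d`,
`a` is regular modulo `b`, and `b` is regular modulo `(c, d)`. -/
structure GoodQuad (a b c d : R) : Prop where
  regD : ∀ r, d * r = 0 → r = 0
  bd : ∀ p q, b * p + d * q = 0 → ∃ r, p = d * r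
  cd : ∀ p q, p * c + q * d = 0 → ∃ r, p = d * r
  regB : ∀ r, b * r = 0 → r = 0
  ab : ∀ p q, p * a + q * b = 0 → ∃ r, p = b * r
  bmod : ∀ h p q, b * h = p * c + q * d → ∃ p' q', h = p' * c + q' * d

variable {a b c d}

lemma GoodQuad.exact₃ (H : GoodQuad a b c d) (r : R) (hr : bdry₃ a b c d r = 0) : r = 0 := by
  simp only [bdry₃, LinearMap.coe_mk, AddHom.coe_mk, Prod.mk_eq_zero] at hr
  exact H.regD r hr.1

lemma GoodQuad.exact₂ (H : GoodQuad a b c d) (u : R × R × R × R) (hu : bdry₂ a b c d u = 0) :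
    ∃ r, bdry₃ a b c d r = u := by
  obtain ⟨u0, u1, u2, u3⟩ := u
  simp only [bdry₂, LinearMap.coe_mk, AddHom.coe_mk, Prod.mk_eq_zero] at hu
  obtain ⟨h0, h1, h2, h3⟩ := hu
  obtain ⟨r, rfl⟩ := H.bd _ _ h0
  have e2 : u2 = -(b * r) := by
    have := H.regD (u2 + b * r) (by linear_combination h0)
    linear_combination this
  have e3 : u3 = a * r := by
    have := H.regD (u3 - a * r) (by linear_combination h2)
    linear_combination this
  have e1 : u1 = -(c * r) := by
    have := H.regB (u1 + c * r) (by subst e2; linear_combination h1)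
    linear_combination this
  refine ⟨r, ?_⟩
  subst e1 e2 e3
  rfl

lemma GoodQuad.exact₁ (H : GoodQuad a b c d) (w : R × R × R × R) (hw : bdry₁ a b c d w = 0) :
    ∃ u, bdry₂ a b c d u = w := by
  obtain ⟨w0, w1, w2, w3⟩ := w
  simp only [bdry₁, LinearMap.coe_mk, AddHom.coe_mk] at hw
  -- The relation reads `a (w₀ c + w₁ d) + b (w₂ c + w₃ d) = 0`, so `(b, -a) h` solves it for some
  -- `h`, which lies in `(c, d)`; what remains are relations between `c` and `d`.
  obtain ⟨h, hh⟩ := H.ab (w0 * c + w1 * d) (w2 * c + w3 * d) (by linear_combination hw)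
  obtain ⟨p, q, rfl⟩ := H.bmod h w0 w1 hh.symm
  have hh2 : w2 * c + w3 * d = -(a * (p * c + q * d)) := by
    have := H.regB (w2 * c + w3 * d + a * (p * c + q * d)) (by linear_combination hw - a * hh)
    linear_combination this
  obtain ⟨r, hr⟩ := H.cd (w0 - b * p) (w1 - b * q) (by linear_combination hh)
  obtain ⟨s, hs⟩ := H.cd (w2 + a * p) (w3 + a * q) (by linear_combination hh2)
  have hr' : w1 = b * q - c * r := by
    have := H.regD (w1 - b * q + c * r) (by linear_combination hh - c * hr)
    linear_combination this
  have hs' : w3 = -(a * q) - c * s := by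
    have := H.regD (w3 + a * q + c * s) (by linear_combination hh2 - c * hs)
    linear_combination this
  refine ⟨(p, q, r, s), ?_⟩
  simp only [bdry₂, LinearMap.coe_mk, AddHom.coe_mk, Prod.mk.injEq]
  exact ⟨by linear_combination -hr, hr'.symm, by linear_combination -hs, hs'.symm⟩

lemma projective_resX (n : ℕ) : Projective (resX R n) := by
  match n with
  | 0 => exact ModuleCat.projective_of_free (Module.Free.chooseBasis R R)
  | 1 => exact ModuleCat.projective_of_free (Module.Free.chooseBasis R (R × R × R × R))
  | 2 => exact ModuleCat.projective_of_free (Module.Free.chooseBasis R (R × R × R × R))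
  | 3 => exact ModuleCat.projective_of_free (Module.Free.chooseBasis R R)
  | _ + 4 => exact ModuleCat.projective_of_free (Module.Free.chooseBasis R PUnit)

lemma GoodQuad.exactAt (H : GoodQuad a b c d) (n : ℕ) :
    (resComplex a b c d).ExactAt (n + 1) := by
  rw [HomologicalComplex.exactAt_iff' _ (n + 1 + 1) (n + 1) n (by simp) (by simp),
    ShortComplex.moduleCat_exact_iff]
  simp only [HomologicalComplex.sc', HomologicalComplex.shortComplexFunctor', ChainComplex.of_d]
  match n with
  | 0 => exact fun w hw => H.exact₁ w hw
  | 1 => exact fun w hw => H.exact₂ w hw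
  | 2 => exact fun w hw => ⟨PUnit.unit, (H.exact₃ w hw).symm⟩
  | _ + 3 => exact fun w hw => ⟨0, rfl⟩

/-- The product ideal `(a, b) * (c, d)`, given by its four generators. -/
def prodIdeal (a b c d : R) : Ideal R := Ideal.span {a * c, a * d, b * c, b * d}

lemma mem_prodIdeal {r : R} : r ∈ prodIdeal a b c d ↔ ∃ w, bdry₁ a b c d w = r := by
  simp only [prodIdeal, Ideal.mem_span_insert, Ideal.mem_span_singleton', bdry₁,
    LinearMap.coe_mk, AddHom.coe_mk, Prod.exists]
  constructor
  · rintro ⟨p, _, ⟨q, _, ⟨s, _, ⟨t, rfl⟩, rfl⟩, rfl⟩, rfl⟩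
    exact ⟨p, q, s, t, by ring⟩
  · rintro ⟨p, q, s, t, rfl⟩
    exact ⟨p, _, ⟨q, _, ⟨s, _, ⟨t, rfl⟩, rfl⟩, rfl⟩, by ring⟩

/-- The end `R⁴ → R → R ⧸ prodIdeal a b c d` of the augmented resolution. -/
def augComplex (a b c d : R) : ShortComplex (ModuleCat.{0} R) :=
  ShortComplex.mk (ModuleCat.ofHom (bdry₁ a b c d))
    (ModuleCat.ofHom (Submodule.mkQ (prodIdeal a b c d))) (by
      refine ModuleCat.hom_ext (LinearMap.ext fun w => ?_)
      exact (Submodule.Quotient.mk_eq_zero _).2 (mem_prodIdeal.2 ⟨w, rfl⟩))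

lemma augComplex_exact : (augComplex a b c d).Exact ∧ Epi (augComplex a b c d).g := by
  constructor
  · rw [ShortComplex.moduleCat_exact_iff]
    intro r hr
    exact mem_prodIdeal.1 ((Submodule.Quotient.mk_eq_zero _).1 hr)
  · exact (ModuleCat.epi_iff_surjective _).2 (Submodule.mkQ_surjective _)

/-- For a good quadruple, `resComplex a b c d` resolves `R ⧸ prodIdeal a b c d`. -/
noncomputable def GoodQuad.resolution (H : GoodQuad a b c d) :
    ProjectiveResolution (ModuleCat.of R (R ⧸ prodIdeal a b c d)) where
  complex := resComplex a b c d
  projective := projective_resX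
  π := (ChainComplex.toSingle₀Equiv _ _).symm
    ⟨ModuleCat.ofHom (Submodule.mkQ (prodIdeal a b c d)), by
      rw [resComplex_d]
      exact (augComplex a b c d).zero⟩
  quasiIso := ⟨fun n => by
    cases n
    · rw [ChainComplex.quasiIsoAt₀_iff, ShortComplex.quasiIso_iff_of_zeros']
      · refine (ShortComplex.exact_and_epi_g_iff_of_iso ?_).2
          (augComplex_exact (a := a) (b := b) (c := c) (d := d))
        refine ShortComplex.isoMk (Iso.refl _) (Iso.refl _) (Iso.refl _) ?_ ?_
        · exact (Category.id_comp _).trans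
            ((resComplex_d (a := a) (b := b) (c := c) (d := d) 0).symm.trans
              (Category.comp_id _).symm)
        · refine (Category.id_comp _).trans (Eq.trans ?_ (Category.comp_id _).symm)
          exact (ChainComplex.toSingle₀Equiv_symm_apply_f_zero (C := resComplex a b c d)
            (X := ModuleCat.of R (R ⧸ prodIdeal a b c d)) _
            ((resComplex_d (a := a) (b := b) (c := c) (d := d) 0).symm ▸
              (augComplex a b c d).zero)).symm
      all_goals rfl
    · rw [quasiIsoAt_iff_exactAt']
      · apply H.exactAt
      · apply ChainComplex.exactAt_succ_single_obj⟩

lemma GoodQuad.resolution_π (H : GoodQuad a b c d) :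
    H.resolution.π.f 0 = ModuleCat.ofHom (Submodule.mkQ (prodIdeal a b c d)) :=
  ChainComplex.toSingle₀Equiv_symm_apply_f_zero _ _

/-! ### Comparison of the resolutions for multiples of the generators -/

section compare

variable (a b c d) (p₁ p₂ q₁ q₂ : R)

/-- The diagonal endomorphism of `R⁴` with entries `t₁, t₂, t₃, t₄`. -/
def diagMap (t₁ t₂ t₃ t₄ : R) : R × R × R × R →ₗ[R] R × R × R × R :=
  (LinearMap.lsmul R R t₁).prodMap ((LinearMap.lsmul R R t₂).prodMap
    ((LinearMap.lsmul R R t₃).prodMap (LinearMap.lsmul R R t₄)))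

/-- The components of `compareMap`: `eᵢⱼ ↦ pᵢ qⱼ eᵢⱼ`, `fⱼ ↦ p₁ p₂ qⱼ fⱼ`, `gᵢ ↦ pᵢ q₁ q₂ gᵢ`, and
multiplication by `p₁ p₂ q₁ q₂` in degree three. -/
def compareF : ∀ n, resX R n ⟶ resX R n
  | 0 => 𝟙 _
  | 1 => ModuleCat.ofHom (diagMap (p₁ * q₁) (p₁ * q₂) (p₂ * q₁) (p₂ * q₂))
  | 2 => ModuleCat.ofHom (diagMap (p₁ * p₂ * q₁) (p₁ * p₂ * q₂) (p₁ * q₁ * q₂) (p₂ * q₁ * q₂))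
  | 3 => ModuleCat.ofHom (LinearMap.lsmul R R (p₁ * p₂ * q₁ * q₂))
  | _ + 4 => 𝟙 _

/-- The chain map from the resolution for `(p₁ a, p₂ b) * (q₁ c, q₂ d)` to the one for
`(a, b) * (c, d)` that is the identity in degree zero. -/
def compareMap : resComplex (p₁ * a) (p₂ * b) (q₁ * c) (q₂ * d) ⟶ resComplex a b c d :=
  ChainComplex.ofHom (compareF p₁ p₂ q₁ q₂) (fun n => by
    rw [resComplex_d, resComplex_d]
    match n with
    | 0 =>
      refine ModuleCat.hom_ext (LinearMap.ext fun w => ?_)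
      change bdry₁ a b c d (diagMap _ _ _ _ w) = bdry₁ _ _ _ _ w
      simp [bdry₁, diagMap]
      ring
    | 1 =>
      refine ModuleCat.hom_ext (LinearMap.ext fun w => ?_)
      change bdry₂ a b c d (diagMap _ _ _ _ w) = diagMap _ _ _ _ (bdry₂ _ _ _ _ w)
      simp only [bdry₂, diagMap, LinearMap.coe_mk, AddHom.coe_mk, LinearMap.prodMap_apply,
        LinearMap.lsmul_apply, smul_eq_mul, Prod.mk.injEq]
      refine ⟨?_, ?_, ?_, ?_⟩ <;> ring
    | 2 =>
      refine ModuleCat.hom_ext (LinearMap.ext fun (w : R) => ?_)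
      change bdry₃ a b c d ((p₁ * p₂ * q₁ * q₂) • w) = diagMap _ _ _ _ (bdry₃ _ _ _ _ w)
      simp only [bdry₃, diagMap, LinearMap.coe_mk, AddHom.coe_mk, LinearMap.prodMap_apply,
        LinearMap.lsmul_apply, smul_eq_mul, Prod.mk.injEq]
      refine ⟨?_, ?_, ?_, ?_⟩ <;> ring
    | _ + 3 => exact comp_zero.trans zero_comp.symm)

end compare
end

/-! ### Classes in `Ext³` and `Ext²` that survive restriction -/

section classes

variable {R : Type} [CommRing R] {a b c d p₁ p₂ q₁ q₂ : R}

/-- `compareMap` lifts the projection between the quotient rings. -/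
lemma compareMap_comm (H : GoodQuad a b c d)
    (H' : GoodQuad (p₁ * a) (p₂ * b) (q₁ * c) (q₂ * d))
    (hle : prodIdeal (p₁ * a) (p₂ * b) (q₁ * c) (q₂ * d) ≤ prodIdeal a b c d) :
    (compareMap a b c d p₁ p₂ q₁ q₂).f 0 ≫ H.resolution.π.f 0 =
      H'.resolution.π.f 0 ≫ ModuleCat.ofHom (Submodule.mapQ _ (prodIdeal a b c d)
        LinearMap.id hle) := by
  rw [H.resolution_π, H'.resolution_π]
  rfl

/-- The functional `φ ↦ φ(e) mod I` on `Hom(M, R)`. -/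
def evalMod {M : ModuleCat.{0} R} (e : M) (I : Ideal R) :
    (M ⟶ ModuleCat.of R R) →ₗ[R] ModuleCat.of R (R ⧸ I) where
  toFun φ := Submodule.mkQ I (φ.hom e)
  map_add' φ ψ := by
    rw [ModuleCat.hom_add, LinearMap.add_apply, map_add]
  map_smul' r φ := by
    rw [ModuleCat.hom_smul, LinearMap.smul_apply, map_smul]
    rfl

lemma evalMod_eq_zero {M : ModuleCat.{0} R} {e : M} {I : Ideal R} {φ : M ⟶ ModuleCat.of R R} :
    evalMod e I φ = 0 ↔ φ.hom e ∈ I :=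
  Submodule.Quotient.mk_eq_zero _

/-- The identity of the top term `R` is a cocycle, restricting to multiplication by `p₁ p₂ q₁ q₂`.
Since coboundaries lie in the ideal generated by the entries of the last differential, the
restricted class is nonzero if that product is outside this ideal. -/
lemma exists_class_three (H : GoodQuad a b c d) :
    ∃ z : ((Ext R (ModuleCat.{0} R) 3).obj
        (op (ModuleCat.of R (R ⧸ prodIdeal a b c d)))).obj (ModuleCat.of R R),
      ∀ {p₁ p₂ q₁ q₂ : R} (_ : GoodQuad (p₁ * a) (p₂ * b) (q₁ * c) (q₂ * d))
        (hle : prodIdeal (p₁ * a) (p₂ * b) (q₁ * c) (q₂ * d) ≤ prodIdeal a b c d),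
        p₁ * p₂ * q₁ * q₂ ∉ Ideal.span {p₁ * a, p₂ * b, q₁ * c, q₂ * d} →
        (((Ext R (ModuleCat.{0} R) 3).map (ModuleCat.ofHom (Submodule.mapQ _ _
          LinearMap.id hle)).op).app (ModuleCat.of R R)) z ≠ 0 := by
  obtain ⟨z, hz⟩ := exists_extClass H.resolution 3 (𝟙 (ModuleCat.of R R)) (by
    change (resComplex a b c d).d 4 3 ≫ _ = 0
    rw [resComplex_d]
    exact zero_comp)
  refine ⟨z, fun {p₁ p₂ q₁ q₂} H' hle hmem => ?_⟩
  let I : Ideal R := Ideal.span {p₁ * a, p₂ * b, q₁ * c, q₂ * d}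
  refine hz H'.resolution _ (compareMap a b c d p₁ p₂ q₁ q₂) (compareMap_comm H H' hle)
    (evalMod (M := ModuleCat.of R R) (1 : R) I) ?_ ?_
  · intro m ψ
    change (resComplex (p₁ * a) (p₂ * b) (q₁ * c) (q₂ * d)).X m ⟶ _ at ψ
    change evalMod (M := ModuleCat.of R R) (1 : R) I
      ((resComplex (p₁ * a) (p₂ * b) (q₁ * c) (q₂ * d)).d 3 m ≫ ψ) = 0
    by_cases hm : m + 1 = 3
    · obtain rfl : m = 2 := by omega
      rw [resComplex_d]
      refine evalMod_eq_zero.2 ?_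
      let ψ' : R × R × R × R →ₗ[R] R := ψ.hom
      change ψ' (bdry₃ (p₁ * a) (p₂ * b) (q₁ * c) (q₂ * d) 1) ∈ I
      have e : bdry₃ (p₁ * a) (p₂ * b) (q₁ * c) (q₂ * d) 1 =
          (q₂ * d) • (1, 0, 0, 0) - (q₁ * c) • (0, 1, 0, 0) - (p₂ * b) • (0, 0, 1, 0)
            + (p₁ * a) • ((0, 0, 0, 1) : R × R × R × R) := by
        simp [bdry₃]
      rw [e, map_add, map_sub, map_sub, map_smul, map_smul, map_smul, map_smul]
      refine I.add_mem (I.sub_mem (I.sub_mem ?_ ?_) ?_) ?_ <;>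
      · rw [smul_eq_mul]
        refine I.mul_mem_right _ (Ideal.subset_span ?_)
        simp
    · rw [HomologicalComplex.shape _ _ _ hm, zero_comp, map_zero]
  · intro h0
    have h1 := evalMod_eq_zero.1 h0
    change (p₁ * p₂ * q₁ * q₂) • (1 : R) ∈ I at h1
    rw [smul_eq_mul, mul_one] at h1
    exact hmem h1

/-- The functional `f₁ ↦ c, f₂ ↦ d, gᵢ ↦ 0` is a cocycle in degree two; its restriction takes the
value `p₁ p₂ q₁ c` on `f₁`. A coboundary maps `f₁` into the ideal of the entries `p₂ b, -p₁ a` of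
its differential. -/
lemma exists_class_two (H : GoodQuad a b c d) :
    ∃ z : ((Ext R (ModuleCat.{0} R) 2).obj
        (op (ModuleCat.of R (R ⧸ prodIdeal a b c d)))).obj (ModuleCat.of R R),
      ∀ {p₁ p₂ q₁ q₂ : R} (_ : GoodQuad (p₁ * a) (p₂ * b) (q₁ * c) (q₂ * d))
        (hle : prodIdeal (p₁ * a) (p₂ * b) (q₁ * c) (q₂ * d) ≤ prodIdeal a b c d),
        p₁ * p₂ * q₁ * c ∉ Ideal.span {p₁ * a, p₂ * b} →
        (((Ext R (ModuleCat.{0} R) 2).map (ModuleCat.ofHom (Submodule.mapQ _ _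
          LinearMap.id hle)).op).app (ModuleCat.of R R)) z ≠ 0 := by
  let α : R × R × R × R →ₗ[R] R :=
    LinearMap.coprod (LinearMap.lsmul R R c) (LinearMap.coprod (LinearMap.lsmul R R d) 0)
  obtain ⟨z, hz⟩ := exists_extClass H.resolution 2
    (Y := ModuleCat.of R R) (ModuleCat.ofHom α) (by
    change (resComplex a b c d).d 3 2 ≫ _ = 0
    rw [resComplex_d]
    refine ModuleCat.hom_ext (LinearMap.ext fun (r : R) => ?_)
    change α (bdry₃ a b c d r) = 0
    simp only [α, bdry₃, LinearMap.coe_mk, AddHom.coe_mk, LinearMap.coprod_apply,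
      LinearMap.lsmul_apply, smul_eq_mul, LinearMap.zero_apply]
    ring)
  refine ⟨z, fun {p₁ p₂ q₁ q₂} H' hle hmem => ?_⟩
  let I : Ideal R := Ideal.span {p₁ * a, p₂ * b}
  refine hz H'.resolution _ (compareMap a b c d p₁ p₂ q₁ q₂) (compareMap_comm H H' hle)
    (evalMod (M := ModuleCat.of R (R × R × R × R)) ((1, 0, 0, 0) : R × R × R × R) I) ?_ ?_
  · intro m ψ
    change (resComplex (p₁ * a) (p₂ * b) (q₁ * c) (q₂ * d)).X m ⟶ _ at ψ
    change evalMod (M := ModuleCat.of R (R × R × R × R)) ((1, 0, 0, 0) : R × R × R × R) I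
      ((resComplex (p₁ * a) (p₂ * b) (q₁ * c) (q₂ * d)).d 2 m ≫ ψ) = 0
    by_cases hm : m + 1 = 2
    · obtain rfl : m = 1 := by omega
      rw [resComplex_d]
      refine evalMod_eq_zero.2 ?_
      let ψ' : R × R × R × R →ₗ[R] R := ψ.hom
      change ψ' (bdry₂ (p₁ * a) (p₂ * b) (q₁ * c) (q₂ * d) (1, 0, 0, 0)) ∈ I
      have e : bdry₂ (p₁ * a) (p₂ * b) (q₁ * c) (q₂ * d) (1, 0, 0, 0) =
          (p₂ * b) • (1, 0, 0, 0) - (p₁ * a) • ((0, 0, 1, 0) : R × R × R × R) := by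
        simp [bdry₂]
      rw [e, map_sub, map_smul, map_smul]
      refine I.sub_mem ?_ ?_ <;>
      · rw [smul_eq_mul]
        refine I.mul_mem_right _ (Ideal.subset_span ?_)
        simp
    · rw [HomologicalComplex.shape _ _ _ hm, zero_comp, map_zero]
  · intro h0
    have h1 := evalMod_eq_zero.1 h0
    change α (diagMap _ _ _ _ (1, 0, 0, 0)) ∈ I at h1
    have e : α (diagMap (p₁ * p₂ * q₁) (p₁ * p₂ * q₂) (p₁ * q₁ * q₂) (p₂ * q₁ * q₂)
        (1, 0, 0, 0)) = p₁ * p₂ * q₁ * c := by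
      simp [α, diagMap]
      ring
    rw [e] at h1
    exact hmem h1

end classes

/-! ### Monomials and powers of the variables -/

section monomials

variable {k : Type} [Field k]

lemma mem_span_pow {S : Set (Fin 4)} {n : ℕ} {x : polyR k} :
    x ∈ Ideal.span ((fun i => (X i : polyR k) ^ n) '' S) ↔
      ∀ m ∈ x.support, ∃ i ∈ S, n ≤ m i := by
  have h := @mem_ideal_span_monomial_image (Fin 4) k _ x ((fun i => Finsupp.single i n) '' S)
  rw [Set.image_image] at h
  simp only [X_pow_eq_monomial]
  rw [h]
  simp

lemma pow_dvd_of_dvd {i j : Fin 4} (hij : i ≠ j) {n : ℕ} {p : polyR k}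
    (h : (X i : polyR k) ^ n ∣ X j ^ n * p) : (X i : polyR k) ^ n ∣ p := by
  refine (X_prime (i := i)).pow_dvd_of_dvd_mul_left n (fun h1 => hij ?_) h
  exact X_dvd_X.1 ((X_prime (i := i)).dvd_of_dvd_pow h1)

lemma goodQuad_pow (n : ℕ) :
    GoodQuad ((X 0 : polyR k) ^ n) (X 1 ^ n) (X 2 ^ n) (X 3 ^ n) where
  regD r h := (mul_eq_zero.1 h).resolve_left (pow_ne_zero _ (X_ne_zero _))
  regB r h := (mul_eq_zero.1 h).resolve_left (pow_ne_zero _ (X_ne_zero _))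
  bd p q h := pow_dvd_of_dvd (i := 3) (j := 1) (by decide)
    ⟨-q, by linear_combination h⟩
  cd p q h := pow_dvd_of_dvd (i := 3) (j := 2) (by decide)
    ⟨-q, by linear_combination h⟩
  ab p q h := pow_dvd_of_dvd (i := 1) (j := 0) (by decide)
    ⟨-q, by linear_combination h⟩
  bmod h p q e := by
    have key : ∀ x : polyR k, x ∈ Ideal.span ((fun i => (X i : polyR k) ^ n) '' {2, 3}) ↔
        ∃ p' q', x = p' * X 2 ^ n + q' * X 3 ^ n := fun x => by
      rw [Set.image_pair, Ideal.mem_span_pair]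
      simp only [eq_comm]
    rw [← key, mem_span_pow]
    intro m hm
    have h1 := mem_span_pow.1 ((key _).2 ⟨p, q, e⟩) (Finsupp.single 1 n + m) (by
      rw [mem_support_iff, X_pow_eq_monomial, coeff_monomial_mul, one_mul]
      exact mem_support_iff.1 hm)
    simpa using h1

lemma monomial_notMem {S : Set (Fin 4)} {n : ℕ} {m : Fin 4 →₀ ℕ} {x : polyR k}
    (hx : x = monomial m 1) (h : ∀ i ∈ S, m i < n) :
    x ∉ Ideal.span ((fun i => (X i : polyR k) ^ n) '' S) := by
  intro h1
  obtain ⟨i, hi, hn⟩ := mem_span_pow.1 h1 m (by simp [hx, mem_support_iff])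
  exact absurd (h i hi) (not_lt.2 hn)

lemma idealB_eq : idealB k = prodIdeal (X 0) (X 1) (X 2) (X 3) := by
  rw [idealB, idealA1, idealA2, Ideal.span_pair_mul_span_pair, prodIdeal]

lemma prodIdeal_pow_le (n : ℕ) :
    prodIdeal ((X 0 : polyR k) ^ n) (X 1 ^ n) (X 2 ^ n) (X 3 ^ n) ≤
      prodIdeal (X 0) (X 1) (X 2) (X 3) ^ n := by
  refine Ideal.span_le.2 ?_
  rintro x (rfl | rfl | rfl | rfl) <;>
  · rw [← mul_pow]
    refine Ideal.pow_mem_pow (Ideal.subset_span ?_) n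
    simp

end monomials

end

/-- Both local cohomology modules `H²_B(R)` and `H³_B(R)` are nonzero. -/
theorem localCohomology_B_nontrivial (k : Type) [Field k] :
    Nontrivial ((localCohomology (idealB k) 2).obj (ModuleCat.of (polyR k) (polyR k))) ∧
      Nontrivial ((localCohomology (idealB k) 3).obj (ModuleCat.of (polyR k) (polyR k))) := by
  rw [idealB_eq]
  have H1 : GoodQuad (X 0 : polyR k) (X 1) (X 2) (X 3) := by simpa using goodQuad_pow (k := k) 1
  have H (t : ℕ) : GoodQuad ((X 0 : polyR k) ^ t * X 0) (X 1 ^ t * X 1) (X 2 ^ t * X 2)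
      (X 3 ^ t * X 3) := by
    simpa only [pow_succ] using goodQuad_pow (k := k) (t + 1)
  -- For `t ≥ 1` this is `(x₁ ^ t, x₂ ^ t) * (y₁ ^ t, y₂ ^ t)`; the value at `t = 0` plays no role.
  let I (t : ℕ) : Ideal (polyR k) := prodIdeal (X 0 ^ (t - 1) * X 0) (X 1 ^ (t - 1) * X 1)
    (X 2 ^ (t - 1) * X 2) (X 3 ^ (t - 1) * X 3)
  have hI (t : ℕ) : I t ≤ prodIdeal (X 0) (X 1) (X 2) (X 3) ^ t := by
    cases t with
    | zero => simp
    | succ t =>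
      simpa only [I, pow_succ _ t, Nat.add_sub_cancel] using prodIdeal_pow_le (k := k) (t + 1)
  have hIJ (t : ℕ) : I (t + 1) ≤ prodIdeal (X 0) (X 1) (X 2) (X 3) :=
    (hI _).trans (Ideal.pow_le_self t.succ_ne_zero)
  constructor
  · obtain ⟨z, hz⟩ := exists_class_two H1
    refine nontrivial_localCohomology _ 2 _ z I hI hIJ fun t => hz (H t) (hIJ t) ?_
    have h := monomial_notMem (k := k) (S := {0, 1}) (n := t + 1)
      (x := X 0 ^ t * X 1 ^ t * X 2 ^ (t + 1))
      (m := Finsupp.single 0 t + Finsupp.single 1 t + Finsupp.single 2 (t + 1))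
      (by simp only [X_pow_eq_monomial, monomial_mul, mul_one]) (by simp)
    rw [Set.image_pair] at h
    simpa only [pow_succ _ t, mul_assoc] using h
  · obtain ⟨z, hz⟩ := exists_class_three H1
    refine nontrivial_localCohomology _ 3 _ z I hI hIJ fun t => hz (H t) (hIJ t) ?_
    have h := monomial_notMem (k := k) (S := {0, 1, 2, 3}) (n := t + 1)
      (x := X 0 ^ t * X 1 ^ t * X 2 ^ t * X 3 ^ t)
      (m := Finsupp.single 0 t + Finsupp.single 1 t + Finsupp.single 2 t + Finsupp.single 3 t)
      (by simp only [X_pow_eq_monomial, monomial_mul, mul_one]) (by simp)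
    rw [Set.image_insert_eq, Set.image_insert_eq, Set.image_pair] at h
    simpa only [pow_succ _ t] using h
end

section
/- The ℚ-vector space of 4-tuples (g₁,g₂,g₃,g₄) of polynomials in S = ℚ[s,u,t,v], each bihomogeneous of bidegree (3,2), satisfying the syzygy equation g₁f₁ + g₂f₂ + g₃f₃ + g₄f₄ = 0, has dimension 12 over ℚ. -/
/-!
Multiplication `(g₁, g₂, g₃, g₄) ↦ ∑ gᵢfᵢ` maps four copies of the space of forms of bidegree
`(3,2)`, of total dimension `4 · 12 = 48`, into the space of forms of bidegree `(5,5)`, of dimension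
`36`. It is surjective (`map_syz_tuples`), so by rank-nullity its kernel has dimension
`48 - 36 = 12`.

Surjectivity already holds using `f₁, f₂, f₃` alone: in the monomial bases their contribution is the
square `36 × 36` matrix whose determinant is Dixon's resultant of three forms of bidegree `(2,3)`,
and it is nonsingular since these three forms have no common zero on `ℙ¹ × ℙ¹` over `ℂ`. The
nonsingularity is verified directly by linear elimination, in the dual form
`dixon_transpose_injective`: a linear functional on bidegree `(5,5)` that vanishes on all products
of `f₁, f₂, f₃` with monomials of bidegree `(3,2)` is zero.
-/

open MvPolynomial

/-- The polynomial ring `S = ℚ[s,u,t,v]`, with `X 0 = s`, `X 1 = u`, `X 2 = t`, `X 3 = v`. -/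
noncomputable abbrev S : Type := MvPolynomial (Fin 4) ℚ

noncomputable def s : S := X 0
noncomputable def u : S := X 1
noncomputable def t : S := X 2
noncomputable def v : S := X 3

/-- `f₁`, of bidegree `(2,3)`. -/
noncomputable def f1 : S :=
  s^2*t^3 + 2*s*u*t^3 + 3*u^2*t^3 + 4*s^2*t^2*v + 5*s*u*t^2*v + 6*u^2*t^2*v +
    7*s^2*t*v^2 + 8*s*u*t*v^2 + 9*u^2*t*v^2 + 10*s^2*v^3 + s*u*v^3 + 2*u^2*v^3

/-- `f₂`, of bidegree `(2,3)`. -/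
noncomputable def f2 : S :=
  2*s^2*t^3 - 3*s^2*t^2*v + s*u*t^2*v - 3*u^2*t^2*v - s^2*t*v^2 + 3*s*u*t*v^2 +
    2*u^2*t*v^2 - u^2*v^3

/-- `f₃`, of bidegree `(2,3)`. -/
noncomputable def f3 : S :=
  2*s^2*t^3 - 2*s*u*t^3 - 3*s^2*t^2*v + 5*s*u*t^2*v - 3*u^2*t^2*v + s^2*t*v^2 -
    3*s*u*t*v^2 + 4*u^2*t*v^2 - u^2*v^3

/-- `f₄`, of bidegree `(2,3)`. -/
noncomputable def f4 : S :=
  -2*s*u*t^3 + 3*s^2*t^2*v + s*u*t^2*v - u^2*t^2*v - s^2*t*v^2 - 3*s*u*t*v^2 +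
    4*u^2*t*v^2 - u^2*v^3

/-- The weight giving the degree in the variables `s, u`. -/
def wSU : Fin 4 → ℕ := ![1, 1, 0, 0]

/-- The weight giving the degree in the variables `t, v`. -/
def wTV : Fin 4 → ℕ := ![0, 0, 1, 1]

/-- A polynomial of `S = ℚ[s,u,t,v]` is bihomogeneous of bidegree `(a,b)` if it is
homogeneous of degree `a` in `s, u` and homogeneous of degree `b` in `t, v`. -/
def IsBihom (a b : ℕ) (p : S) : Prop :=
  IsWeightedHomogeneous wSU p a ∧ IsWeightedHomogeneous wTV p b

/-- The `ℚ`-subspace of `S` of bihomogeneous polynomials of bidegree `(a,b)`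
(together with `0`). -/
noncomputable def bihom (a b : ℕ) : Submodule ℚ S :=
  weightedHomogeneousSubmodule ℚ wSU a ⊓ weightedHomogeneousSubmodule ℚ wTV b

/-- The tuple `(f₁, f₂, f₃, f₄)`. -/
noncomputable def f : Fin 4 → S := ![f1, f2, f3, f4]

/-- The `ℚ`-linear map sending `(g₁,g₂,g₃,g₄)` to `g₁f₁ + g₂f₂ + g₃f₃ + g₄f₄`. -/
noncomputable def syz : (Fin 4 → S) →ₗ[ℚ] S :=
  ∑ i : Fin 4, (LinearMap.mulRight ℚ (f i)).comp (LinearMap.proj i)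

/-! ### Monomial bases -/

/-- The monomial `s^i u^(a-i) t^j v^(b-j)`, of bidegree `(a,b)` when `i ≤ a` and `j ≤ b`. -/
noncomputable def mono (a b i j : ℕ) : S := s ^ i * u ^ (a - i) * t ^ j * v ^ (b - j)

/-- The exponent vectors of the monomials of bidegree `(a,b)`. -/
def expo (a b : ℕ) : Set (Fin 4 →₀ ℕ) := {d | d 0 + d 1 = a ∧ d 2 + d 3 = b}

theorem bihom_eq_restrictSupport (a b : ℕ) : bihom a b = restrictSupport ℚ (expo a b) := by
  have hw : ∀ d : Fin 4 →₀ ℕ, Finsupp.weight wSU d = d 0 + d 1 ∧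
      Finsupp.weight wTV d = d 2 + d 3 := fun d => by
    simp [Finsupp.weight_apply, Finsupp.sum_fintype, Fin.sum_univ_four, wSU, wTV]
  ext p
  simp only [bihom, Submodule.mem_inf, mem_weightedHomogeneousSubmodule, IsWeightedHomogeneous,
    mem_restrictSupport_iff, Set.subset_def, SetLike.mem_coe, mem_support_iff, expo, hw,
    Set.mem_ofPred_eq]
  exact ⟨fun h d hd => ⟨h.1 hd, h.2 hd⟩, fun h => ⟨fun d hd => (h d hd).1, fun d hd => (h d hd).2⟩⟩

/-- An exponent vector of bidegree `(a,b)` is determined by its exponents of `s` and `t`. -/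
noncomputable def expoEquiv (a b : ℕ) : expo a b ≃ Fin (a + 1) × Fin (b + 1) where
  toFun d := (⟨d.1 0, by have := d.2.1; omega⟩, ⟨d.1 2, by have := d.2.2; omega⟩)
  invFun p := ⟨Finsupp.equivFunOnFinite.symm ![p.1, a - p.1, p.2, b - p.2], by
    have h1 := p.1.2
    have h2 := p.2.2
    constructor <;> simp <;> omega⟩
  left_inv d := by
    obtain ⟨d, h1, h2⟩ := d
    ext k
    fin_cases k <;> simp <;> omega
  right_inv p := by ext <;> simp

instance (a b : ℕ) : Finite (expo a b) := Finite.of_equiv _ (expoEquiv a b).symm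

theorem bihom_finite (a b : ℕ) : Module.Finite ℚ (bihom a b) := by
  rw [bihom_eq_restrictSupport]
  exact Module.Finite.of_basis (basisRestrictSupport ℚ (expo a b))

theorem finrank_bihom (a b : ℕ) : Module.finrank ℚ (bihom a b) = (a + 1) * (b + 1) := by
  rw [bihom_eq_restrictSupport,
    Module.finrank_eq_nat_card_basis (basisRestrictSupport ℚ (expo a b)),
    Nat.card_congr (expoEquiv a b)]
  simp

theorem mono_eq_monomial (a b i j : ℕ) : mono a b i j =
    monomial (Finsupp.equivFunOnFinite.symm ![i, a - i, j, b - j]) 1 := by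
  rw [monomial_eq, Finsupp.prod_fintype _ _ (fun _ => pow_zero _)]
  simp [Fin.prod_univ_four, mono, s, u, t, v]

theorem mono_mem_bihom {a b i j : ℕ} (hi : i ≤ a) (hj : j ≤ b) : mono a b i j ∈ bihom a b := by
  rw [bihom_eq_restrictSupport, mono_eq_monomial, monomial_mem_restrictSupport]
  left
  constructor <;> simp <;> omega

theorem bihom_le_of_mono_mem {a b : ℕ} {N : Submodule ℚ S}
    (h : ∀ i < a + 1, ∀ j < b + 1, mono a b i j ∈ N) : bihom a b ≤ N := by
  rw [bihom_eq_restrictSupport, restrictSupport_eq_span, Submodule.span_le]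
  rintro _ ⟨d, ⟨h1, h2⟩, rfl⟩
  have hd : d = Finsupp.equivFunOnFinite.symm ![d 0, a - d 0, d 2, b - d 2] := by
    ext k
    fin_cases k <;> simp <;> omega
  have := h (d 0) (by omega) (d 2) (by omega)
  rwa [mono_eq_monomial, ← hd] at this

theorem bihom_mul {a b c d : ℕ} {p q : S} (hp : p ∈ bihom a b) (hq : q ∈ bihom c d) :
    p * q ∈ bihom (a + c) (b + d) :=
  ⟨IsWeightedHomogeneous.mul hp.1 hq.1, IsWeightedHomogeneous.mul hp.2 hq.2⟩

/-! ### The forms `f₁`, `f₂`, `f₃` generate everything in bidegree `(5,5)` -/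

/-- The truncated subtractions that occur in the exponents of `mono (a + 2) (b + 3)`. -/
theorem mono_exponents (i c : ℕ) : i + c - i = c ∧
    i + c + 2 - (i + 2) = c ∧ i + c + 2 - (i + 1) = c + 1 ∧ i + c + 2 - i = c + 2 ∧
    i + c + 3 - (i + 3) = c ∧ i + c + 3 - (i + 2) = c + 1 ∧ i + c + 3 - (i + 1) = c + 2 ∧
    i + c + 3 - i = c + 3 := by
  omega

theorem mono_mul_f1 {a b i j : ℕ} (hi : i ≤ a) (hj : j ≤ b) :
    mono a b i j * f1 =
      mono (a + 2) (b + 3) (i + 2) (j + 3) + 4 • mono (a + 2) (b + 3) (i + 2) (j + 2) +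
        7 • mono (a + 2) (b + 3) (i + 2) (j + 1) + 10 • mono (a + 2) (b + 3) (i + 2) j +
        2 • mono (a + 2) (b + 3) (i + 1) (j + 3) +
        5 • mono (a + 2) (b + 3) (i + 1) (j + 2) +
        8 • mono (a + 2) (b + 3) (i + 1) (j + 1) + mono (a + 2) (b + 3) (i + 1) j +
        3 • mono (a + 2) (b + 3) i (j + 3) + 6 • mono (a + 2) (b + 3) i (j + 2) +
        9 • mono (a + 2) (b + 3) i (j + 1) + 2 • mono (a + 2) (b + 3) i j := by
  obtain ⟨c, rfl⟩ := Nat.exists_eq_add_of_le hi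
  obtain ⟨d, rfl⟩ := Nat.exists_eq_add_of_le hj
  simp only [mono, mono_exponents, f1]
  ring

theorem mono_mul_f2 {a b i j : ℕ} (hi : i ≤ a) (hj : j ≤ b) :
    mono a b i j * f2 =
      2 • mono (a + 2) (b + 3) (i + 2) (j + 3) -
        3 • mono (a + 2) (b + 3) (i + 2) (j + 2) - mono (a + 2) (b + 3) (i + 2) (j + 1) +
        mono (a + 2) (b + 3) (i + 1) (j + 2) + 3 • mono (a + 2) (b + 3) (i + 1) (j + 1) -
        3 • mono (a + 2) (b + 3) i (j + 2) + 2 • mono (a + 2) (b + 3) i (j + 1) -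
        mono (a + 2) (b + 3) i j := by
  obtain ⟨c, rfl⟩ := Nat.exists_eq_add_of_le hi
  obtain ⟨d, rfl⟩ := Nat.exists_eq_add_of_le hj
  simp only [mono, mono_exponents, f2]
  ring

theorem mono_mul_f3 {a b i j : ℕ} (hi : i ≤ a) (hj : j ≤ b) :
    mono a b i j * f3 =
      2 • mono (a + 2) (b + 3) (i + 2) (j + 3) -
        3 • mono (a + 2) (b + 3) (i + 2) (j + 2) + mono (a + 2) (b + 3) (i + 2) (j + 1) -
        2 • mono (a + 2) (b + 3) (i + 1) (j + 3) +
        5 • mono (a + 2) (b + 3) (i + 1) (j + 2) -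
        3 • mono (a + 2) (b + 3) (i + 1) (j + 1) - 3 • mono (a + 2) (b + 3) i (j + 2) +
        4 • mono (a + 2) (b + 3) i (j + 1) - mono (a + 2) (b + 3) i j := by
  obtain ⟨c, rfl⟩ := Nat.exists_eq_add_of_le hi
  obtain ⟨d, rfl⟩ := Nat.exists_eq_add_of_le hj
  simp only [mono, mono_exponents, f3]
  ring

theorem mono_mul_f4 {a b i j : ℕ} (hi : i ≤ a) (hj : j ≤ b) :
    mono a b i j * f4 =
      3 • mono (a + 2) (b + 3) (i + 2) (j + 2) - mono (a + 2) (b + 3) (i + 2) (j + 1) -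
        2 • mono (a + 2) (b + 3) (i + 1) (j + 3) + mono (a + 2) (b + 3) (i + 1) (j + 2) -
        3 • mono (a + 2) (b + 3) (i + 1) (j + 1) - mono (a + 2) (b + 3) i (j + 2) +
        4 • mono (a + 2) (b + 3) i (j + 1) - mono (a + 2) (b + 3) i j := by
  obtain ⟨c, rfl⟩ := Nat.exists_eq_add_of_le hi
  obtain ⟨d, rfl⟩ := Nat.exists_eq_add_of_le hj
  simp only [mono, mono_exponents, f4]
  ring

-- One elimination for each of the 36 unknowns exceeds the default limit.
set_option maxHeartbeats 8000000 in
/-- Dixon's `36 × 36` matrix for `f₁, f₂, f₃` is nonsingular, stated for the dual map: `x` holds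
the values on monomials of a linear functional on bidegree `(5,5)`, and the hypotheses say that it
kills the products of `f₁, f₂, f₃` with the twelve monomials of bidegree `(3,2)`. -/
theorem dixon_transpose_injective (x : ℕ → ℕ → ℚ)
    (h1 : ∀ i < 4, ∀ j < 3,
      x (i + 2) (j + 3) + 4 * x (i + 2) (j + 2) + 7 * x (i + 2) (j + 1) +
        10 * x (i + 2) j + 2 * x (i + 1) (j + 3) + 5 * x (i + 1) (j + 2) +
        8 * x (i + 1) (j + 1) + x (i + 1) j + 3 * x i (j + 3) + 6 * x i (j + 2) +
        9 * x i (j + 1) + 2 * x i j = 0)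
    (h2 : ∀ i < 4, ∀ j < 3,
      2 * x (i + 2) (j + 3) - 3 * x (i + 2) (j + 2) - x (i + 2) (j + 1) +
        x (i + 1) (j + 2) + 3 * x (i + 1) (j + 1) - 3 * x i (j + 2) + 2 * x i (j + 1) -
        x i j = 0)
    (h3 : ∀ i < 4, ∀ j < 3,
      2 * x (i + 2) (j + 3) - 3 * x (i + 2) (j + 2) + x (i + 2) (j + 1) -
        2 * x (i + 1) (j + 3) + 5 * x (i + 1) (j + 2) - 3 * x (i + 1) (j + 1) -
        3 * x i (j + 2) + 4 * x i (j + 1) - x i j = 0) :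
    ∀ a < 6, ∀ b < 6, x a b = 0 := by
  -- Unrolling the bounded quantifiers leaves 36 scalar equations in the 36 unknowns `x a b`.
  simp only [Nat.forall_lt_succ_right, Nat.not_lt_zero, false_imp_iff, imp_true_iff, true_and,
    Nat.reduceAdd] at *
  casesm* _ ∧ _
  constructorm* _ ∧ _ <;> linarith

theorem f_mem_bihom (k : Fin 4) : f k ∈ bihom 2 3 := by
  -- Multiplying by the trivial monomial, `mono_mul_f1` etc. expand `f k` in monomials.
  have h1 : mono 0 0 0 0 = 1 := by simp [mono]
  have hf : f k = mono 0 0 0 0 * f k := by rw [h1, one_mul]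
  rw [hf]
  fin_cases k <;> simp only [f, Fin.zero_eta, Fin.mk_one, Fin.reduceFinMk, Matrix.cons_val]
  · rw [mono_mul_f1 le_rfl le_rfl]
    repeat' first
      | apply add_mem | apply sub_mem | apply nsmul_mem
      | exact mono_mem_bihom (by norm_num) (by norm_num)
  · rw [mono_mul_f2 le_rfl le_rfl]
    repeat' first
      | apply add_mem | apply sub_mem | apply nsmul_mem
      | exact mono_mem_bihom (by norm_num) (by norm_num)
  · rw [mono_mul_f3 le_rfl le_rfl]
    repeat' first
      | apply add_mem | apply sub_mem | apply nsmul_mem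
      | exact mono_mem_bihom (by norm_num) (by norm_num)
  · rw [mono_mul_f4 le_rfl le_rfl]
    repeat' first
      | apply add_mem | apply sub_mem | apply nsmul_mem | apply neg_mem
      | exact mono_mem_bihom (by norm_num) (by norm_num)

/-- The space of 4-tuples of forms of bidegree `(3,2)`. -/
noncomputable abbrev tuples : Submodule ℚ (Fin 4 → S) :=
  ⨅ i : Fin 4, (bihom 3 2).comap (LinearMap.proj (R := ℚ) i)

theorem mem_tuples {g : Fin 4 → S} : g ∈ tuples ↔ ∀ i, g i ∈ bihom 3 2 := by
  simp [tuples, Submodule.mem_iInf]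

theorem syz_apply (g : Fin 4 → S) : syz g = ∑ i, g i * f i := by
  simp [syz]

theorem single_mem_tuples (k : Fin 4) {p : S} (hp : p ∈ bihom 3 2) :
    Pi.single k p ∈ tuples := by
  rw [mem_tuples]
  intro i
  by_cases h : i = k
  · subst h
    simpa using hp
  · simp [h]

theorem mul_f_mem_map (k : Fin 4) {p : S} (hp : p ∈ bihom 3 2) : p * f k ∈ tuples.map syz := by
  refine ⟨Pi.single k p, single_mem_tuples k hp, ?_⟩
  rw [syz_apply, Finset.sum_eq_single k] <;> simp +contextual

/-- The map `g ↦ ∑ gᵢfᵢ` from bidegree `(3,2)` to bidegree `(5,5)` is surjective. -/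
theorem map_syz_tuples : tuples.map syz = bihom 5 5 := by
  apply le_antisymm
  · rintro _ ⟨g, hg, rfl⟩
    rw [syz_apply]
    exact Submodule.sum_mem _ fun i _ => bihom_mul (mem_tuples.1 hg i) (f_mem_bihom i)
  · apply bihom_le_of_mono_mem
    intro a ha b hb
    by_contra hab
    -- A functional `φ` separates the missing monomial from the image.
    obtain ⟨φ, hφ, hker⟩ := Submodule.exists_le_ker_of_notMem hab
    have hz : ∀ (k : Fin 4) {i j : ℕ}, i < 4 → j < 3 → φ (mono 3 2 i j * f k) = 0 :=
      fun k i j hi hj => hker (mul_f_mem_map k (mono_mem_bihom (by omega) (by omega)))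
    refine hφ (dixon_transpose_injective (fun i j => φ (mono 5 5 i j)) ?_ ?_ ?_ a ha b hb)
    · intro i hi j hj
      have h := hz 0 hi hj
      rw [show f 0 = f1 from rfl, mono_mul_f1 (by omega) (by omega)] at h
      simp only [map_add, map_nsmul, Nat.reduceAdd] at h
      simpa only [nsmul_eq_mul, Nat.cast_ofNat] using h
    · intro i hi j hj
      have h := hz 1 hi hj
      rw [show f 1 = f2 from rfl, mono_mul_f2 (by omega) (by omega)] at h
      simp only [map_add, map_sub, map_nsmul, Nat.reduceAdd] at h
      simpa only [nsmul_eq_mul, Nat.cast_ofNat] using h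
    · intro i hi j hj
      have h := hz 2 hi hj
      rw [show f 2 = f3 from rfl, mono_mul_f3 (by omega) (by omega)] at h
      simp only [map_add, map_sub, map_nsmul, Nat.reduceAdd] at h
      simpa only [nsmul_eq_mul, Nat.cast_ofNat] using h

/-! ### Counting dimensions -/

/-- The inclusion of `(bihom 3 2)⁴` into `S⁴`; its range is `tuples`. -/
noncomputable def tuplesIncl : (Fin 4 → bihom 3 2) →ₗ[ℚ] (Fin 4 → S) :=
  LinearMap.pi fun i => (bihom 3 2).subtype ∘ₗ LinearMap.proj i

theorem range_tuplesIncl : LinearMap.range tuplesIncl = tuples := by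
  ext g
  rw [mem_tuples]
  constructor
  · rintro ⟨h, rfl⟩ i
    exact (h i).2
  · intro h
    exact ⟨fun i => ⟨g i, h i⟩, rfl⟩

theorem tuplesIncl_injective : Function.Injective tuplesIncl := fun g h hgh => by
  ext1 i
  exact Subtype.ext (congrFun hgh i)

theorem tuples_finite : Module.Finite ℚ tuples := by
  have := bihom_finite 3 2
  rw [← range_tuplesIncl]
  infer_instance

theorem finrank_tuples : Module.finrank ℚ tuples = 48 := by
  have := bihom_finite 3 2
  rw [← range_tuplesIncl, LinearMap.finrank_range_of_inj tuplesIncl_injective,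
    Module.finrank_pi_fintype]
  simp [finrank_bihom]

/-- The `ℚ`-vector space of 4-tuples `(g₁,g₂,g₃,g₄)` of polynomials of `S`, each
bihomogeneous of bidegree `(3,2)`, satisfying `g₁f₁ + g₂f₂ + g₃f₃ + g₄f₄ = 0`,
has dimension `12` over `ℚ`. -/
theorem syzygy_space_dim_twelve :
    Module.finrank ℚ
      ↥((⨅ i : Fin 4, (bihom 3 2).comap (LinearMap.proj (R := ℚ) i)) ⊓ LinearMap.ker syz) =
      12 := by
  have := tuples_finite
  have hrn := (syz.domRestrict tuples).finrank_range_add_finrank_ker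
  rw [LinearMap.range_domRestrict, map_syz_tuples, finrank_bihom, finrank_tuples] at hrn
  -- Pushed forward to `S⁴`, the kernel of the restricted map is the space of syzygies.
  have hmap : (LinearMap.ker (syz.domRestrict tuples)).map tuples.subtype =
      tuples ⊓ LinearMap.ker syz := by
    rw [LinearMap.ker_domRestrict, Submodule.map_comap_subtype]
  have hker := (tuples.equivSubtypeMap (LinearMap.ker (syz.domRestrict tuples))).finrank_eq
  rw [hmap] at hker
  change Module.finrank ℚ ↥(tuples ⊓ LinearMap.ker syz) = 12
  omega
end

section
/- The only 4-tuple (h₁₂₃, h₁₂₄, h₁₃₄, h₂₃₄) of polynomials in S = ℚ[s,u,t,v], each bihomogeneous of bidegree (3,2), that is a Koszul 3-cycle for (f₁,f₂,f₃,f₄) — i.e., such that Σ_{i<j<k} h_{ijk} e_i ∧ e_j ∧ e_k is annihilated by contraction with (f₁,f₂,f₃,f₄) — is the zero tuple. -/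
/-!
The cycle equations with `f₄` in them give `h₁₂₃ f₃ = -h₁₂₄ f₄` and `h₁₂₃ f₂ = h₁₃₄ f₄`, so `f₄`
divides `h₁₂₃ p` for every `p` in the ideal `(f₂, f₃, f₄)`. This ideal contains the nonzero
polynomial `8 s (u - s)³ t⁴` (`ideal_certificate`), which is free of `v`. Hence `f₄`, which has
degree `3` in `v`, divides a polynomial whose degree in `v` is that of `h₁₂₃`, at most `2`
because `h₁₂₃` has bidegree `(3,2)`. As `S` is a domain, `h₁₂₃ = 0`; the other three
components are then killed by multiplication with `f₄ ≠ 0`.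
-/


open MvPolynomial

/-- An element of the ideal `(f₂, f₃, f₄)` free of `v`. The cofactors, of bidegree `(2,1)`, come
from solving the linear system that cancels every monomial of bidegree `(4,4)` containing `v`. -/
lemma ideal_certificate :
    (-u^2*v + 6*u^2*t - 3*s*u*v - 11*s*u*t - 9*s^2*v + 24*s^2*t) * f2 +
      (-u^2*v - 7*u^2*t + 27*s*u*v - 3*s*u*t - 28*s^2*t) * f3 +
      (2*u^2*v + 3*u^2*t - 24*s*u*v + 14*s*u*t + 9*s^2*v + 2*s^2*t) * f4 =
    8 * (s * (u - s)^3 * t^4) := by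
  unfold f2 f3 f4
  ring

lemma three_le_degreeOf_f4 : 3 ≤ degreeOf 3 f4 := by
  -- the monomial `u²v³` occurs in `f₄`, with coefficient `-1`
  have hc : coeff (Finsupp.single 1 2 + Finsupp.single 3 3) f4 = -1 := by
    have e : f4 = monomial (Finsupp.single 0 1 + Finsupp.single 1 1 + Finsupp.single 2 3) (-2)
        + monomial (Finsupp.single 0 2 + Finsupp.single 2 2 + Finsupp.single 3 1) 3
        + monomial (Finsupp.single 0 1 + Finsupp.single 1 1 + Finsupp.single 2 2
            + Finsupp.single 3 1) 1
        + monomial (Finsupp.single 1 2 + Finsupp.single 2 2 + Finsupp.single 3 1) (-1)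
        + monomial (Finsupp.single 0 2 + Finsupp.single 2 1 + Finsupp.single 3 2) (-1)
        + monomial (Finsupp.single 0 1 + Finsupp.single 1 1 + Finsupp.single 2 1
            + Finsupp.single 3 2) (-3)
        + monomial (Finsupp.single 1 2 + Finsupp.single 2 1 + Finsupp.single 3 2) 4
        + monomial (Finsupp.single 1 2 + Finsupp.single 3 3) (-1) := by
      simp only [monomial_eq, f4, s, u, t, v]
      simp [Finsupp.prod_add_index', pow_add, map_ofNat C]
      ring
    rw [e]
    simp [coeff_monomial, Finsupp.ext_iff, Fin.forall_fin_succ, Finsupp.single_apply]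
  have hm := monomial_le_degreeOf 3 (mem_support_iff.2 (hc.trans_ne (by norm_num)))
  simpa using hm

lemma f4_ne_zero : f4 ≠ 0 := by
  intro h
  have := three_le_degreeOf_f4
  simp [h] at this

lemma degreeOf_le_of_isBihom {a b : ℕ} {p : S} (hp : IsBihom a b p) : degreeOf 3 p ≤ b := by
  rw [degreeOf_le_iff]
  intro m hm
  have := hp.2 (mem_support_iff.1 hm)
  simp [Finsupp.weight_apply, Finsupp.sum_fintype, Fin.sum_univ_succ, wTV] at this
  change m 2 + m 3 = b at this
  omega

lemma degreeOf_eliminant : degreeOf 3 (8 * (s * (u - s)^3 * t^4)) = 0 := by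
  have hs : degreeOf 3 s = 0 := degreeOf_X_of_ne (by decide)
  have hu : degreeOf 3 u = 0 := degreeOf_X_of_ne (by decide)
  have ht : degreeOf 3 t = 0 := degreeOf_X_of_ne (by decide)
  have h8 : degreeOf 3 (8 : S) = 0 := degreeOf_C (8 : ℚ) 3
  have h1 := degreeOf_mul_le 3 8 (s * (u - s)^3 * t^4)
  have h2 := degreeOf_mul_le 3 (s * (u - s)^3) (t^4)
  have h3 := degreeOf_mul_le 3 s ((u - s)^3)
  have h4 := degreeOf_pow_le 3 (u - s) 3
  have h5 := degreeOf_pow_le 3 t 4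
  have h6 := degreeOf_sub_le 3 u s
  rw [hs, hu] at h6
  simp only [max_self] at h6
  omega

lemma eliminant_ne_zero : 8 * (s * (u - s)^3 * t^4) ≠ 0 := by
  intro h
  -- the value at `(s,u,t,v) = (1,2,1,0)` is `8`
  have := congrArg (eval (![1, 2, 1, 0] : Fin 4 → ℚ)) h
  simp [s, u, t] at this
  norm_num at this

/-- The only 4-tuple `(h₁₂₃, h₁₂₄, h₁₃₄, h₂₃₄)` of polynomials of `S`, each bihomogeneous
of bidegree `(3,2)`, that is a Koszul 3-cycle for `(f₁,f₂,f₃,f₄)` — i.e. such that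
`Σ_{i<j<k} h_{ijk} e_i ∧ e_j ∧ e_k` is annihilated by contraction with `(f₁,f₂,f₃,f₄)`,
which amounts to the vanishing of the coefficient of each `e_a ∧ e_b` (`a < b`) listed
below — is the zero tuple. -/
theorem koszul_three_cycle_zero
    (h123 h124 h134 h234 : S)
    (b123 : IsBihom 3 2 h123) (b124 : IsBihom 3 2 h124)
    (b134 : IsBihom 3 2 h134) (b234 : IsBihom 3 2 h234)
    (c12 : h123 * f3 + h124 * f4 = 0)
    (c13 : -(h123 * f2) + h134 * f4 = 0)
    (c14 : -(h124 * f2) - h134 * f3 = 0)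
    (c23 : h123 * f1 + h234 * f4 = 0)
    (c24 : h124 * f1 - h234 * f3 = 0)
    (c34 : h134 * f1 + h234 * f2 = 0) :
    h123 = 0 ∧ h124 = 0 ∧ h134 = 0 ∧ h234 = 0 := by
  have h0 : h123 = 0 := by
    by_contra hne
    let A := -u^2*v + 6*u^2*t - 3*s*u*v - 11*s*u*t - 9*s^2*v + 24*s^2*t
    let B := -u^2*v - 7*u^2*t + 27*s*u*v - 3*s*u*t - 28*s^2*t
    let C := 2*u^2*v + 3*u^2*t - 24*s*u*v + 14*s*u*t + 9*s^2*v + 2*s^2*t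
    have key : 8 * (s * (u - s)^3 * t^4) * h123 = f4 * (A * h134 - B * h124 + C * h123) := by
      linear_combination -h123 * ideal_certificate - A * c13 + B * c12
    have hq : A * h134 - B * h124 + C * h123 ≠ 0 := by
      intro hq
      rw [hq, mul_zero] at key
      exact mul_ne_zero eliminant_ne_zero hne key
    have hd := congrArg (degreeOf 3) key
    rw [degreeOf_mul_eq eliminant_ne_zero hne, degreeOf_mul_eq f4_ne_zero hq,
      degreeOf_eliminant] at hd
    have := degreeOf_le_of_isBihom b123
    have := three_le_degreeOf_f4
    omega
  subst h0
  simp only [zero_mul, zero_add, neg_zero] at c12 c13 c23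
  exact ⟨rfl, (mul_eq_zero.1 c12).resolve_right f4_ne_zero,
    (mul_eq_zero.1 c13).resolve_right f4_ne_zero, (mul_eq_zero.1 c23).resolve_right f4_ne_zero⟩
end

section
/- There exists an irreducible homogeneous polynomial H ∈ ℚ[T₁,T₂,T₃,T₄] of degree 12 such that H(f₁,f₂,f₃,f₄) = 0 in ℚ[s,u,t,v]; moreover H generates the ideal of all polynomials in ℚ[T₁,T₂,T₃,T₄] vanishing at (f₁(p), f₂(p), f₃(p), f₄(p)) for every point p ∈ ℚ⁴ (i.e., the vanishing ideal of the Zariski closure of the image of the parametrization is principal, generated by H, the implicit equation of the surface). -/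
/-!
The relations between `f₁, …, f₄` form a homogeneous prime ideal `I` of `ℚ[T₁, T₂, T₃, T₄]`, and
since `ℚ` is infinite, `P ∈ I` if and only if `P` vanishes at `(f₁(p), …, f₄(p))` for all `p ∈ ℚ⁴`.
The Jacobian criterion at a rational point shows that `f₂, f₃, f₄` are algebraically independent
(`eq_zero_of_aeval_succ`), so by Gauss's lemma any irreducible element of `I` generates `I`
(`dvd_of_aeval_eq_zero`). A nonzero form `H ∈ I` of minimal degree `d` is irreducible
(`exists_irreducible_form`). It remains to see that `d = 12`; geometrically,
`12 = 2 · 2 · 3` is the number of common zeros of two general combinations of the `fᵢ`.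

* Existence and `d ≤ 12`: substituting the `fᵢ` maps the forms of degree `n` into the space of
  bihomogeneous polynomials of bidegree `(2n, 3n)`, so
  `C(n + 3, 3) ≤ dim I_n + (2n + 1)(3n + 1)` (`choose_le_finrank_rels`), while
  `dim I_n ≤ C(n - d + 3, 3)` since `I = (H)` (`finrank_rels_le`). For `n = 200` the first
  inequality gives `I_n ≠ 0` and the two together exclude `d ≥ 13`.
* `d ≥ 12`: over the field with `151` elements there is a line in `ℙ³` with twelve distinct points
  that are images of points at which the parametrization is transversal to the line. For a relation
  `G` modulo `151`, the component of lowest degree in the two equations of the line, in linear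
  coordinates adapted to it, vanishes on `𝔽² × {q}` for each of these points `q`. If
  `deg G ≤ 11`, this component is zero, hence so is `G` (`form_mod_eq_zero`). Over `ℚ` one clears
  denominators and divides by the largest possible power of `151` (`form_rat_eq_zero`).
-/

open MvPolynomial

namespace Implicit

/-! ### The parametrization over an arbitrary ring -/

/-- The binary cubic form with coefficients `c`. -/
def cub {R : Type*} [CommRing R] (c : Fin 4 → ℤ) (t v : R) : R :=
  c 0 * t ^ 3 + c 1 * t ^ 2 * v + c 2 * t * v ^ 2 + c 3 * v ^ 3

/-- The derivative of `cub c` at `(t, v)` in the direction `(x, y)`. -/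
def dcub {R : Type*} [CommRing R] (c : Fin 4 → ℤ) (t v x y : R) : R :=
  (3 * c 0 * t ^ 2 + 2 * c 1 * t * v + c 2 * v ^ 2) * x +
    (c 1 * t ^ 2 + 2 * c 2 * t * v + 3 * c 3 * v ^ 2) * y

/-- Coefficients of `s²` in `f₁, …, f₄`, as cubic forms in `t, v`. -/
def cA : Fin 4 → Fin 4 → ℤ := ![![1, 4, 7, 10], ![2, -3, -1, 0], ![2, -3, 1, 0], ![0, 3, -1, 0]]

/-- Coefficients of `su` in `f₁, …, f₄`, as cubic forms in `t, v`. -/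
def cB : Fin 4 → Fin 4 → ℤ := ![![2, 5, 8, 1], ![0, 1, 3, 0], ![-2, 5, -3, 0], ![-2, 1, -3, 0]]

/-- Coefficients of `u²` in `f₁, …, f₄`, as cubic forms in `t, v`. -/
def cC : Fin 4 → Fin 4 → ℤ := ![![3, 6, 9, 2], ![0, -3, 2, -1], ![0, -3, 4, -1], ![0, -1, 4, -1]]

/-- The tuple `(f₁, f₂, f₃, f₄)` evaluated at a point with coordinates in any commutative ring. -/
def phi {R : Type*} [CommRing R] (p : Fin 4 → R) (i : Fin 4) : R :=
  p 0 ^ 2 * cub (cA i) (p 2) (p 3) + p 0 * p 1 * cub (cB i) (p 2) (p 3) +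
    p 1 ^ 2 * cub (cC i) (p 2) (p 3)

/-- The derivative of `phi` at `p` in the direction `w`. -/
def dphi {R : Type*} [CommRing R] (p w : Fin 4 → R) (i : Fin 4) : R :=
  2 * p 0 * w 0 * cub (cA i) (p 2) (p 3) + (w 0 * p 1 + p 0 * w 1) * cub (cB i) (p 2) (p 3) +
    2 * p 1 * w 1 * cub (cC i) (p 2) (p 3) +
    p 0 ^ 2 * dcub (cA i) (p 2) (p 3) (w 2) (w 3) + p 0 * p 1 * dcub (cB i) (p 2) (p 3) (w 2) (w 3) +
    p 1 ^ 2 * dcub (cC i) (p 2) (p 3) (w 2) (w 3)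

lemma f_eq_phi : f = phi (X : Fin 4 → S) := by
  funext i
  fin_cases i <;>
    simp [f, f1, f2, f3, f4, phi, cub, cA, cB, cC, s, u, t, v] <;> ring

lemma map_phi {R R' : Type*} [CommRing R] [CommRing R'] (g : R →+* R') (p : Fin 4 → R)
    (i : Fin 4) : g (phi p i) = phi (fun j => g (p j)) i := by
  simp [phi, cub]

lemma f_isHomogeneous (i : Fin 4) : (f i).IsHomogeneous 5 := by
  have hx : ∀ j : Fin 4, (X j : S).IsHomogeneous 1 := isHomogeneous_X ℚ
  have hc : ∀ c : Fin 4 → ℤ, (cub c (X 2 : S) (X 3)).IsHomogeneous 3 := by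
    intro c
    have hz : ∀ z : ℤ, (z : S).IsHomogeneous 0 := fun z => by
      simpa using isHomogeneous_C (Fin 4) (z : ℚ)
    refine IsHomogeneous.add (IsHomogeneous.add (IsHomogeneous.add ?_ ?_) ?_) ?_
    · simpa using (hz _).mul ((hx 2).pow 3)
    · simpa using ((hz _).mul ((hx 2).pow 2)).mul (hx 3)
    · simpa using ((hz _).mul (hx 2)).mul ((hx 3).pow 2)
    · simpa using (hz _).mul ((hx 3).pow 3)
  rw [f_eq_phi]
  refine IsHomogeneous.add (IsHomogeneous.add ?_ ?_) ?_
  · simpa using ((hx 0).pow 2).mul (hc _)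
  · simpa using ((hx 0).mul (hx 1)).mul (hc _)
  · simpa using ((hx 1).pow 2).mul (hc _)

/-- The arc `p + w ε`, with `ε = Polynomial.X`. -/
noncomputable def arc {F : Type*} [CommRing F] (p w : Fin 4 → F) (j : Fin 4) : Polynomial F :=
  Polynomial.C (p j) + Polynomial.C (w j) * Polynomial.X

lemma eval_zero_phi_arc {F : Type*} [CommRing F] (p w : Fin 4 → F) (i : Fin 4) :
    (phi (arc p w) i).eval 0 = phi p i := by
  have := map_phi (Polynomial.evalRingHom (0 : F)) (arc p w) i
  simpa [arc] using this

lemma eval_zero_derivative_phi_arc {F : Type*} [CommRing F] (p w : Fin 4 → F) (i : Fin 4) :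
    (Polynomial.derivative (phi (arc p w) i)).eval 0 = dphi p w i := by
  simp [phi, arc, cub, dphi, dcub, Polynomial.derivative_pow]
  ring

/-- A polynomial vanishing at `0` is `X` times a polynomial whose value at `0` is the
derivative at `0`. -/
lemma exists_eq_X_mul {F : Type*} [CommRing F] (q : Polynomial F) (h : q.eval 0 = 0) :
    ∃ r : Polynomial F, q = Polynomial.X * r ∧
      r.eval 0 = (Polynomial.derivative q).eval 0 := by
  obtain ⟨r, rfl⟩ : Polynomial.X ∣ q := by
    rw [Polynomial.X_dvd_iff, Polynomial.coeff_zero_eq_eval_zero, h]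
  exact ⟨r, rfl, by simp⟩

/-! ### Lowest weighted homogeneous component along an arc -/

/-- If `G ≠ 0` vanishes on a vector whose `j`-th entry is `ε ^ w j * a j`, then some nonzero
`w`-homogeneous component of `G` (the lowest one, the same for all `a`) vanishes at `a(0)`. -/
lemma exists_component {F σ : Type*} [CommRing F] (w : σ → ℕ) (G : MvPolynomial σ F)
    (hG : G ≠ 0) :
    ∃ k, weightedHomogeneousComponent w k G ≠ 0 ∧
      ∀ a : σ → Polynomial F, aeval (fun j => Polynomial.X ^ w j * a j) G = 0 →
        eval (fun j => (a j).eval 0) (weightedHomogeneousComponent w k G) = 0 := by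
  classical
  obtain ⟨d, hd, hmin⟩ := Finset.exists_min_image G.support (Finsupp.weight w)
    (support_nonempty.2 hG)
  refine ⟨Finsupp.weight w d, ?_, ?_⟩
  · intro h
    have := congrArg (coeff d) h
    rw [coeff_weightedHomogeneousComponent, if_pos rfl] at this
    exact (mem_support_iff.1 hd) (by simpa using this)
  · intro a ha
    have h1 := congrArg (fun q => Polynomial.coeff q (Finsupp.weight w d)) ha
    refine Eq.trans ?_ (h1.trans (Polynomial.coeff_zero _))
    rw [weightedHomogeneousComponent_apply, map_sum, Finset.sum_filter]
    simp only [aeval_def, eval₂_eq, Polynomial.finsetSum_coeff]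
    refine Finset.sum_congr rfl fun e he => ?_
    have hX : ∏ i ∈ e.support, (Polynomial.X ^ w i * a i) ^ e i =
        Polynomial.X ^ (Finsupp.weight w e) * ∏ i ∈ e.support, a i ^ e i := by
      simp only [mul_pow, Finset.prod_mul_distrib, ← pow_mul]
      rw [Finset.prod_pow_eq_pow_sum, Finsupp.weight_apply, Finsupp.sum]
      simp [mul_comm]
    rw [hX, Polynomial.algebraMap_eq, Polynomial.coeff_C_mul, Polynomial.coeff_X_pow_mul']
    rcases (hmin e he).lt_or_eq with h | h
    · rw [if_neg h.ne', if_neg (by lia), mul_zero]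
    · rw [if_pos h.symm, if_pos h.symm.le, h, Nat.sub_self, Polynomial.coeff_zero_eq_eval_zero,
        eval_monomial, Finsupp.prod, Polynomial.eval_prod]
      simp

/-! ### Algebraic independence of `f₂, f₃, f₄` -/

/-- Jacobian criterion: the directional derivatives of `f₂, f₃, f₄` at `(1, 1, 1, 0)` fill `ℚ³`,
so the lowest homogeneous component of a relation, expanded around `(f₂, f₃, f₄)(1, 1, 1, 0)`,
vanishes on `ℚ³`. -/
lemma eq_zero_of_aeval_succ (G : MvPolynomial (Fin 3) ℚ)
    (h : aeval (fun j : Fin 3 => f j.succ) G = 0) : G = 0 := by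
  set P : Fin 4 → ℚ := ![1, 1, 1, 0] with hP
  set z : Fin 3 → ℚ := fun j => phi P j.succ with hz
  set G' : MvPolynomial (Fin 3) ℚ := aeval (fun j => X j + C (z j)) G with hG'
  have hback : aeval (fun j => X j - C (z j)) G' = G := by
    rw [hG', ← AlgHom.comp_apply, comp_aeval]
    simp [← algebraMap_eq]
  by_contra hG
  have hG0 : G' ≠ 0 := by
    intro h0
    rw [h0, map_zero] at hback
    exact hG hback.symm
  obtain ⟨k, hk, hvan⟩ := exists_component (fun _ => 1) G' hG0
  refine hk (MvPolynomial.funext fun y => ?_)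
  rw [map_zero]
  -- `w` is the solution of the linear system `dphi P w = y`
  set w : Fin 4 → ℚ := ![-y 0 + 5 / 4 * y 1 - 5 / 4 * y 2, -1 / 2 * y 0 + 1 / 4 * y 1 - 3 / 4 * y 2,
    0, -y 0 + y 1 - y 2] with hw
  have hdw : ∀ j : Fin 3, dphi P w j.succ = y j := by
    intro j
    fin_cases j <;> simp [dphi, cub, dcub, hP, hw, cA, cB, cC] <;> ring
  have hq : ∀ j : Fin 3, ∃ r : Polynomial ℚ,
      phi (arc P w) j.succ - Polynomial.C (z j) = Polynomial.X * r ∧ r.eval 0 = y j := by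
    intro j
    obtain ⟨r, hr, hr0⟩ := exists_eq_X_mul (phi (arc P w) j.succ - Polynomial.C (z j))
      (by simp [eval_zero_phi_arc, hz])
    refine ⟨r, hr, ?_⟩
    rw [hr0, Polynomial.derivative_sub, Polynomial.derivative_C, sub_zero,
      eval_zero_derivative_phi_arc, hdw]
  choose r hr hr0 using hq
  have := hvan r ?_
  · simpa [hr0] using this
  · simp only [pow_one, ← hr]
    rw [hG', ← AlgHom.comp_apply, comp_aeval]
    have h2 := congrArg (aeval (arc P w)) h
    rw [map_zero, ← AlgHom.comp_apply, comp_aeval] at h2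
    rw [← h2]
    congr 2
    funext j
    have := map_phi (aeval (R := ℚ) (arc P w)).toRingHom X j.succ
    simp only [f_eq_phi]
    simp at this ⊢
    rw [this]

/-! ### Lower bound for the degree -/

instance : Fact (Nat.Prime 151) := ⟨by norm_num⟩

/-- Twelve points `(s, u, t, v)` over the field with 151 elements, with distinct images on the line
`T₁ = T₃ + 129 T₄`, `T₂ = 135 T₃ + 98 T₄`, each normalized so that `f₄ = 1`. The fifth entry is the
value of `f₃`, the last four are the inverse (row by row) of the Jacobian of
`(f₁ - f₃ - 129 f₄, f₂ - 135 f₃ - 98 f₄)` with respect to `s` and `t`. -/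
def pts : Fin 12 → Fin 9 → ZMod 151 := ![
  ![47, 18, 59, 58, 108, 79, 108, 109, 55],
  ![2, 55, 35, 112, 44, 0, 50, 147, 68],
  ![8, 17, 64, 69, 120, 95, 16, 24, 123],
  ![44, 42, 115, 138, 8, 13, 1, 1, 69],
  ![38, 84, 79, 148, 32, 51, 25, 114, 52],
  ![109, 39, 82, 129, 89, 123, 53, 116, 91],
  ![121, 42, 137, 138, 81, 30, 3, 140, 6],
  ![103, 55, 122, 112, 79, 131, 54, 103, 32],
  ![70, 98, 51, 68, 123, 112, 139, 6, 31],
  ![92, 127, 43, 73, 75, 12, 131, 98, 30],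
  ![118, 123, 46, 44, 129, 46, 111, 109, 15],
  ![6, 123, 104, 44, 121, 38, 63, 51, 90]]

/-- The `i`-th of the twelve points. -/
def pt (i : Fin 12) : Fin 4 → ZMod 151 := ![pts i 0, pts i 1, pts i 2, pts i 3]

/-- The linear change of coordinates of `ℙ³` that moves the line of `pts` to `T₁ = T₂ = 0`. -/
def chg {R : Type*} [CommRing R] (y : Fin 4 → R) : Fin 4 → R :=
  ![y 0 - y 2 - 129 * y 3, y 1 - 135 * y 2 - 98 * y 3, y 2, y 3]

/-- The inverse of `chg`. -/
def chgInv {R : Type*} [CommRing R] (y : Fin 4 → R) : Fin 4 → R :=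
  ![y 0 + y 2 + 129 * y 3, y 1 + 135 * y 2 + 98 * y 3, y 2, y 3]

lemma chg_pt : ∀ i, chg (phi (pt i)) = ![0, 0, pts i 4, 1] := by decide +kernel

lemma pts_injective : ∀ i j, pts i 4 = pts j 4 → i = j := by decide +kernel

/-- The tangent vector at `pt i` in the `s, t` directions that `(f₁ - f₃ - 129 f₄, f₂ - 135 f₃ - 98 f₄)`
maps to `(α, β)`. -/
def dir (i : Fin 12) (α β : ZMod 151) : Fin 4 → ZMod 151 :=
  ![pts i 5 * α + pts i 6 * β, 0, pts i 7 * α + pts i 8 * β, 0]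

lemma chg_dphi_basis : ∀ i,
    (chg (dphi (pt i) (dir i 1 0)) 0 = 1 ∧ chg (dphi (pt i) (dir i 1 0)) 1 = 0) ∧
    (chg (dphi (pt i) (dir i 0 1)) 0 = 0 ∧ chg (dphi (pt i) (dir i 0 1)) 1 = 1) := by
  decide +kernel

lemma chg_dphi (i : Fin 12) (α β : ZMod 151) :
    chg (dphi (pt i) (dir i α β)) 0 = α ∧ chg (dphi (pt i) (dir i α β)) 1 = β := by
  obtain ⟨⟨h1, h2⟩, h3, h4⟩ := chg_dphi_basis i
  constructor
  · calc chg (dphi (pt i) (dir i α β)) 0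
        = α * chg (dphi (pt i) (dir i 1 0)) 0 + β * chg (dphi (pt i) (dir i 0 1)) 0 := by
          simp [chg, dphi, dcub, dir]; ring
      _ = α := by rw [h1, h3]; ring
  · calc chg (dphi (pt i) (dir i α β)) 1
        = α * chg (dphi (pt i) (dir i 1 0)) 1 + β * chg (dphi (pt i) (dir i 0 1)) 1 := by
          simp [chg, dphi, dcub, dir]; ring
      _ = β := by rw [h2, h4]; ring

/-- A form of degree at most `11` in `α, β, x, y` that vanishes at `(α, β, xᵢ, 1)` for all `α, β`
and twelve values `xᵢ` is zero: by homogeneity it has twelve roots in `x` for fixed `α, β, y ≠ 0`. -/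
lemma form_eq_zero (G : MvPolynomial (Fin 4) (ZMod 151)) (d : ℕ) (hd : d ≤ 11)
    (hG : G.IsHomogeneous d)
    (h : ∀ (i : Fin 12) (α β : ZMod 151), eval ![α, β, pts i 4, 1] G = 0) : G = 0 := by
  have key : ∀ r : Fin 4 → ZMod 151, r 3 ≠ 0 → eval r G = 0 := by
    intro r hr
    set q : Polynomial (ZMod 151) := aeval ![Polynomial.C (r 0), Polynomial.C (r 1), Polynomial.X,
      Polynomial.C (r 3)] G with hq
    have hev : ∀ x, q.eval x = eval ![r 0, r 1, x, r 3] G := by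
      intro x
      have : (Polynomial.aeval x) q = eval ![r 0, r 1, x, r 3] G := by
        rw [hq, ← AlgHom.comp_apply, comp_aeval, ← aeval_eq_eval]
        congr 2
        funext j
        fin_cases j <;> simp
      simpa using this
    have hq0 : q = 0 := by
      refine Polynomial.eq_zero_of_natDegree_lt_card_of_eval_eq_zero q
        (f := fun i : Fin 12 => r 3 * pts i 4) ?_ ?_ ?_
      · intro i j hij
        exact pts_injective i j (mul_left_cancel₀ hr hij)
      · intro i
        rw [hev]
        have h1 := h i (r 0 / r 3) (r 1 / r 3)
        have h2 : eval (fun j => r 3 * (![r 0 / r 3, r 1 / r 3, pts i 4, 1] : Fin 4 → _) j) G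
            = r 3 ^ d * eval ![r 0 / r 3, r 1 / r 3, pts i 4, 1] G := by
          simp only [eval_eq, Finset.mul_sum, mul_pow, Finset.prod_mul_distrib,
            Finset.prod_pow_eq_pow_sum]
          refine Finset.sum_congr rfl fun e he => ?_
          rw [← hG.degree_eq_sum_deg_support he]
          ring
        rw [h1, mul_zero] at h2
        rw [← h2]
        congr 2
        funext j
        fin_cases j <;> simp [mul_div_cancel₀ _ hr]
      · have := aeval_natDegree_le (n := 1) G (hG.totalDegree_le.trans hd)
          ![Polynomial.C (r 0), Polynomial.C (r 1), Polynomial.X, Polynomial.C (r 3)]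
          (by intro j; fin_cases j <;> simp)
        rw [Fintype.card_fin]
        lia
    have := hev (r 2)
    rw [hq0, Polynomial.eval_zero] at this
    rw [this]
    congr 2
    funext j
    fin_cases j <;> rfl
  have h3 : X 3 * G = 0 := by
    refine ((isHomogeneous_X _ 3).mul hG).eq_zero_of_forall_eval_eq_zero_of_le_card ?_ ?_
    · intro r
      by_cases hr : r 3 = 0
      · simp [hr]
      · simp [key r hr]
    · rw [Cardinal.mk_fintype, ZMod.card]
      norm_cast
      lia
  exact (mul_eq_zero.1 h3).resolve_left (X_ne_zero _)

/-- No nonzero form of degree at most `11` over the field with 151 elements vanishes on the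
parametrization. -/
lemma form_mod_eq_zero (H : MvPolynomial (Fin 4) (ZMod 151)) (d : ℕ) (hd : d ≤ 11)
    (hH : H.IsHomogeneous d)
    (h : ∀ p : Fin 4 → Polynomial (ZMod 151), aeval (phi p) H = 0) : H = 0 := by
  set G : MvPolynomial (Fin 4) (ZMod 151) := aeval (chgInv X) H with hGdef
  have hback : aeval (chg X) G = H := by
    rw [hGdef, ← AlgHom.comp_apply, comp_aeval]
    conv_rhs => rw [← aeval_X_left_apply H]
    congr 2
    funext j
    fin_cases j <;> simp only [chg, chgInv] <;>
      simp [-aeval_eq_bind₁] <;> ring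
  by_contra hH0
  have hG0 : G ≠ 0 := fun h0 => hH0 (by rw [← hback, h0, map_zero])
  have hGhom : G.IsHomogeneous d := by
    have := hH.aeval (n := 1) (chgInv (X : Fin 4 → MvPolynomial (Fin 4) (ZMod 151))) ?_
    · rwa [one_mul] at this
    · have hx : ∀ j : Fin 4, (X j : MvPolynomial (Fin 4) (ZMod 151)).IsHomogeneous 1 :=
        isHomogeneous_X _
      have hc : ∀ (n : ℕ) [n.AtLeastTwo] (j : Fin 4),
          ((OfNat.ofNat n : MvPolynomial (Fin 4) (ZMod 151)) * X j).IsHomogeneous 1 := by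
        intro n _ j
        have := isHomogeneous_C_mul_X ((OfNat.ofNat n : ZMod 151)) j
        rwa [map_ofNat C n] at this
      intro j
      fin_cases j
      · exact ((hx 0).add (hx 2)).add (hc _ 3)
      · exact ((hx 1).add (hc _ 2)).add (hc _ 3)
      · exact hx 2
      · exact hx 3
  obtain ⟨k, hk, hvan⟩ := exists_component ![1, 1, 0, 0] G hG0
  refine hk (form_eq_zero _ d hd ?_ ?_)
  · intro e he
    refine hGhom fun h0 => he ?_
    classical
    rw [coeff_weightedHomogeneousComponent, h0, ite_self]
  · intro i α β
    obtain ⟨hα, hβ⟩ := chg_dphi i α β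
    set p := arc (pt i) (dir i α β)
    have hval : ∀ j, (chg (phi p) j).eval 0 = (![0, 0, pts i 4, 1] : Fin 4 → _) j := by
      intro j
      rw [← chg_pt i]
      fin_cases j <;> simp [chg, p, eval_zero_phi_arc]
    obtain ⟨a, ha, ha0⟩ := exists_eq_X_mul (chg (phi p) 0) (hval 0)
    obtain ⟨b, hb, hb0⟩ := exists_eq_X_mul (chg (phi p) 1) (hval 1)
    have ha1 : a.eval 0 = α := by
      rw [ha0, ← hα]
      simp [chg, p, eval_zero_derivative_phi_arc]
    have hb1 : b.eval 0 = β := by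
      rw [hb0, ← hβ]
      simp [chg, p, eval_zero_derivative_phi_arc]
    have := hvan ![a, b, chg (phi p) 2, chg (phi p) 3] ?_
    · rw [← this]
      congr 2
      funext j
      fin_cases j
      · exact ha1.symm
      · exact hb1.symm
      · exact (hval 2).symm
      · exact (hval 3).symm
    · rw [hGdef, ← AlgHom.comp_apply, comp_aeval, ← h p]
      congr 2
      funext j
      have hc : ∀ l, Polynomial.X ^ (![1, 1, 0, 0] : Fin 4 → ℕ) l *
          (![a, b, chg (phi p) 2, chg (phi p) 3] : Fin 4 → _) l = chg (phi p) l := by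
        intro l
        fin_cases l <;> simp [ha, hb]
      simp only [hc]
      fin_cases j <;> simp [chgInv, chg] <;> ring

/-- There is no nonzero relation of degree at most `11` between the `fᵢ`: an integral multiple of
it, divided by the largest possible power of `151`, would reduce to a nonzero relation modulo `151`. -/
lemma form_rat_eq_zero (H : MvPolynomial (Fin 4) ℚ) (d : ℕ) (hd : d ≤ 11)
    (hH : H.IsHomogeneous d) (h : aeval f H = 0) : H = 0 := by
  by_contra hH0
  obtain ⟨c, hc, H₀, hH₀⟩ : ∃ c : ℤ, c ≠ 0 ∧ ∃ H₀ : MvPolynomial (Fin 4) ℤ,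
      map (algebraMap ℤ ℚ) H₀ = C (c : ℚ) * H := by
    let := algebraMvPolynomial (σ := Fin 4) (R := ℤ) (S := ℚ)
    obtain ⟨⟨a, m, hm⟩, hx⟩ := IsLocalization.surj
      ((nonZeroDivisors ℤ).map (C : ℤ →+* MvPolynomial (Fin 4) ℤ)) H
    obtain ⟨c, hc, rfl⟩ := hm
    refine ⟨c, nonZeroDivisors.ne_zero hc, a, ?_⟩
    rw [algebraMap_def] at hx
    rw [← hx, mul_comm]
    simp
  have hcQ : (c : ℚ) ≠ 0 := by exact_mod_cast hc
  have hinj : Function.Injective (map (σ := Fin 4) (algebraMap ℤ ℚ)) :=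
    map_injective _ (algebraMap ℤ ℚ).injective_int
  have hH₀0 : H₀ ≠ 0 := by
    rintro rfl
    rw [map_zero, eq_comm, mul_eq_zero, C_eq_zero] at hH₀
    exact hH₀.elim hcQ hH0
  have hp : Prime (C (151 : ℤ) : MvPolynomial (Fin 4) ℤ) :=
    (prime_C_iff (σ := Fin 4)).2 (Nat.prime_iff_prime_int.1 (by norm_num : Nat.Prime 151))
  obtain ⟨n, b, hb, rfl⟩ := WfDvdMonoid.max_power_factor hH₀0 hp.irreducible
  rw [← C_pow] at hH₀ hH₀0
  have hbhom : b.IsHomogeneous d := by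
    intro e he
    have h1 : (map (algebraMap ℤ ℚ) (C (151 ^ n) * b)).IsHomogeneous d :=
      hH₀ ▸ hH.C_mul _
    refine h1 ?_
    rw [coeff_map, coeff_C_mul]
    simpa using he
  have hb0 : aeval (phi (X : Fin 4 → MvPolynomial (Fin 4) ℤ)) b = 0 := by
    have h1 : aeval (phi (X : Fin 4 → MvPolynomial (Fin 4) ℤ)) (C (151 ^ n) * b) = 0 := by
      apply hinj
      have h2 := congrArg (aeval f) hH₀
      rw [map_mul (aeval f) (C (c : ℚ)) H, h, mul_zero, aeval_map_algebraMap] at h2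
      rw [map_zero, ← h2]
      have h3 : (map (algebraMap ℤ ℚ)).comp
          (aeval (phi (X : Fin 4 → MvPolynomial (Fin 4) ℤ)) : _ →ₐ[ℤ] _).toRingHom =
          (aeval f : MvPolynomial (Fin 4) ℤ →ₐ[ℤ] S).toRingHom := by
        refine ringHom_ext (fun r => ?_) (fun i => ?_)
        · simp
        · have := map_phi (map (algebraMap ℤ ℚ)) (X : Fin 4 → MvPolynomial (Fin 4) ℤ) i
          simp only [map_X] at this
          simpa [f_eq_phi] using this
      exact congrArg (fun g => g (C (151 ^ n) * b)) h3
    rw [map_mul, mul_eq_zero] at h1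
    refine h1.resolve_left ?_
    rw [algHom_C, algebraMap_eq, C_eq_zero]
    exact pow_ne_zero _ (by norm_num)
  refine hb ((C_dvd_iff_zmod 151 b).2 ?_)
  refine form_mod_eq_zero _ d hd (hbhom.map _) fun p => ?_
  have h1 := congrArg (aeval p) hb0
  rw [map_zero, ← AlgHom.comp_apply, comp_aeval] at h1
  rw [← h1]
  have h2 := aeval_map_algebraMap (ZMod 151) (phi p) b
  rw [show algebraMap ℤ (ZMod 151) = Int.castRingHom (ZMod 151) from rfl] at h2
  rw [h2]
  congr 2
  funext j
  have := map_phi (aeval (R := ℤ) p).toRingHom X j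
  simp at this
  rw [this]

/-! ### Principality of the relation ideal -/

/-- If `h` is irreducible over a UFD `A`, then it divides every polynomial `p` having a common
root `x` with it in a field containing `A`: over the fraction field of `A` the two are not coprime,
and Gauss's lemma brings divisibility down to `A`. -/
lemma dvd_of_common_root {A L : Type*} [CommRing A] [IsDomain A] [UniqueFactorizationMonoid A]
    [Field L] (g : A →+* L) (hg : Function.Injective g) (x : L)
    (h p : Polynomial A) (hirr : Irreducible h) (hx : h.eval₂ g x = 0) (px : p.eval₂ g x = 0) :
    h ∣ p := by
  have heval : ∀ q : Polynomial A, (q.map (algebraMap A (FractionRing A))).eval₂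
      (IsFractionRing.lift hg) x = q.eval₂ g x := by
    intro q
    rw [Polynomial.eval₂_map]
    congr 1
    exact RingHom.ext fun y => IsFractionRing.lift_algebraMap hg y
  have hdeg : h.natDegree ≠ 0 := by
    intro h0
    obtain ⟨c, rfl⟩ := Polynomial.natDegree_eq_zero.1 h0
    rw [Polynomial.eval₂_C, map_eq_zero_iff g hg] at hx
    exact hirr.ne_zero (by rw [hx, Polynomial.C_0])
  have hprim := hirr.isPrimitive hdeg
  by_contra hnd
  have hirrK := (hprim.irreducible_iff_irreducible_map_fraction_map (K := FractionRing A)).1 hirr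
  obtain ⟨a, b, hab⟩ := hirrK.coprime_iff_not_dvd.2 fun hd =>
    hnd (hprim.dvd_of_fraction_map_dvd_fraction_map (K := FractionRing A) hd)
  have := congrArg (Polynomial.eval₂ (IsFractionRing.lift hg) x) hab
  rw [Polynomial.eval₂_add, Polynomial.eval₂_mul, Polynomial.eval₂_mul, heval, heval, hx, px,
    mul_zero, mul_zero, add_zero, Polynomial.eval₂_one] at this
  exact zero_ne_one this

/-- An irreducible relation divides every relation: as polynomials in the first variable over
`ℚ[T₂, T₃, T₄]`, which embeds into `S` because `f₂, f₃, f₄` are algebraically independent, both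
have the root `f₁`. -/
lemma dvd_of_aeval_eq_zero (H P : MvPolynomial (Fin 4) ℚ) (hH : Irreducible H)
    (hH0 : aeval f H = 0) (hP0 : aeval f P = 0) : H ∣ P := by
  let g : MvPolynomial (Fin 3) ℚ →+* S := (aeval (fun j : Fin 3 => f j.succ)).toRingHom
  have hg : Function.Injective g :=
    (injective_iff_map_eq_zero g).2 eq_zero_of_aeval_succ
  have heval : ∀ Q : MvPolynomial (Fin 4) ℚ,
      (finSuccEquiv ℚ 3 Q).eval₂ g (f 0) = aeval f Q := by
    intro Q
    have h2 : (Polynomial.eval₂RingHom g (f 0)).comp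
        (finSuccEquiv ℚ 3 : MvPolynomial (Fin 4) ℚ →+* Polynomial (MvPolynomial (Fin 3) ℚ)) =
        (aeval f : MvPolynomial (Fin 4) ℚ →ₐ[ℚ] S).toRingHom := by
      refine ringHom_ext (fun r => ?_) (fun i => ?_)
      · simp [g, finSuccEquiv_apply]
      · refine Fin.cases ?_ (fun j => ?_) i
        · simp [finSuccEquiv_apply]
        · simp [g, finSuccEquiv_apply]
    exact congrArg (fun k => k Q) h2
  rw [← map_dvd_iff (finSuccEquiv ℚ 3)]
  refine dvd_of_common_root ((algebraMap S (FractionRing S)).comp g)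
    ((IsFractionRing.injective S (FractionRing S)).comp hg) (algebraMap S (FractionRing S) (f 0))
    _ _ ((MulEquiv.irreducible_iff _).2 hH) ?_ ?_
  · rw [← Polynomial.hom_eval₂, heval, hH0, map_zero]
  · rw [← Polynomial.hom_eval₂, heval, hP0, map_zero]

/-- The ideal of relations is homogeneous. -/
lemma aeval_homogeneousComponent (P : MvPolynomial (Fin 4) ℚ) (h : aeval f P = 0) (n : ℕ) :
    aeval f (homogeneousComponent n P) = 0 := by
  have h1 := congrArg (homogeneousComponent (5 * n)) h
  have h2 : ∀ i, (aeval f (homogeneousComponent i P)).IsHomogeneous (5 * i) := fun i =>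
    (homogeneousComponent_isHomogeneous i P).aeval f f_isHomogeneous
  have h3 : homogeneousComponent (5 * n) (aeval f P) =
      ∑ i ∈ Finset.range (P.totalDegree + 1),
        if i = n then aeval f (homogeneousComponent n P) else 0 := by
    conv_lhs => rw [← sum_homogeneousComponent P]
    rw [map_sum, map_sum]
    refine Finset.sum_congr rfl fun i _ => ?_
    rw [homogeneousComponent_of_mem (h2 i)]
    by_cases hi : i = n
    · simp [hi]
    · rw [if_neg hi, if_neg (by lia)]
  rw [h3, map_zero, Finset.sum_ite_eq'] at h1
  split_ifs at h1 with hn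
  · exact h1
  · rw [homogeneousComponent_eq_zero _ _ (by rw [Finset.mem_range] at hn; lia), map_zero]

/-- The homogeneous components of a multiple of a form are multiples of the form. -/
lemma homogeneousComponent_mul_form (H Q : MvPolynomial (Fin 4) ℚ) (d n : ℕ)
    (hH : H.IsHomogeneous d) :
    homogeneousComponent (d + n) (H * Q) = H * homogeneousComponent n Q := by
  have h3 : homogeneousComponent (d + n) (H * Q) =
      ∑ i ∈ Finset.range (Q.totalDegree + 1),
        if i = n then H * homogeneousComponent n Q else 0 := by
    conv_lhs => rw [← sum_homogeneousComponent Q]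
    rw [Finset.mul_sum, map_sum]
    refine Finset.sum_congr rfl fun i _ => ?_
    rw [homogeneousComponent_of_mem (hH.mul (homogeneousComponent_isHomogeneous i Q))]
    by_cases hi : i = n
    · simp [hi]
    · rw [if_neg hi, if_neg (by lia)]
  rw [h3, Finset.sum_ite_eq']
  split_ifs with hn
  · rfl
  · rw [homogeneousComponent_eq_zero _ _ (by rw [Finset.mem_range] at hn; lia), mul_zero]

/-! ### Counting forms of degree `n` -/

lemma finrank_homogeneousSubmodule (n : ℕ) :
    Module.finrank ℚ (homogeneousSubmodule (Fin 4) ℚ n) = (n + 3).choose 3 := by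
  have h1 : homogeneousSubmodule (Fin 4) ℚ n =
      restrictSupport ℚ ((Finset.univ.finsuppAntidiag n : Finset (Fin 4 →₀ ℕ)) : Set _) := by
    rw [homogeneousSubmodule_eq_finsupp_supported, restrictSupport]
    congr 1
    ext e
    simp [Finsupp.degree_eq_sum]
  rw [h1, Module.finrank_eq_card_basis (basisRestrictSupport ℚ _), ← Set.toFinset_card, Finset.toFinset_coe,
    Finset.card_finsuppAntidiag_nat_eq_choose, Finset.card_univ, Fintype.card_fin,
    show 4 + n - 1 = n + 3 by lia, Nat.choose_symm_add]

lemma f_isBihom (i : Fin 4) : IsBihom 2 3 (f i) := by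
  have key : ∀ w : Fin 4 → ℕ, ∀ a b : ℕ, w 0 = a → w 1 = a → w 2 = b → w 3 = b →
      IsWeightedHomogeneous w (f i) (2 * a + 3 * b) := by
    intro w a b h0 h1 h2 h3
    have hx : ∀ j : Fin 4, IsWeightedHomogeneous w (X j : S) (w j) :=
      isWeightedHomogeneous_X ℚ w
    have hc : ∀ c : Fin 4 → ℤ, IsWeightedHomogeneous w (cub c (X 2 : S) (X 3)) (3 * b) := by
      intro c
      have hz : ∀ z : ℤ, IsWeightedHomogeneous w (z : S) 0 := fun z => by
        simpa using isWeightedHomogeneous_C w (z : ℚ)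
      refine IsWeightedHomogeneous.add (IsWeightedHomogeneous.add
        (IsWeightedHomogeneous.add ?_ ?_) ?_) ?_
      · convert (hz _).mul ((hx 2).pow 3) using 1
        simp [h2]
      · convert ((hz _).mul ((hx 2).pow 2)).mul (hx 3) using 1
        simp [h2, h3]
        ring
      · convert ((hz _).mul (hx 2)).mul ((hx 3).pow 2) using 1
        simp [h2, h3]
        ring
      · convert (hz _).mul ((hx 3).pow 3) using 1
        simp [h3]
    rw [f_eq_phi]
    refine IsWeightedHomogeneous.add (IsWeightedHomogeneous.add ?_ ?_) ?_
    · convert ((hx 0).pow 2).mul (hc _) using 1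
      simp [h0]
    · convert ((hx 0).mul (hx 1)).mul (hc _) using 1
      simp [h0, h1]
      ring
    · convert ((hx 1).pow 2).mul (hc _) using 1
      simp [h1]
  exact ⟨key wSU 1 0 rfl rfl rfl rfl, key wTV 0 1 rfl rfl rfl rfl⟩

lemma isWeightedHomogeneous_aeval {w : Fin 4 → ℕ} {a : ℕ}
    (hf : ∀ i, IsWeightedHomogeneous w (f i) a) (P : MvPolynomial (Fin 4) ℚ) (n : ℕ)
    (hP : P.IsHomogeneous n) : IsWeightedHomogeneous w (aeval f P) (n * a) := by
  rw [aeval_def, eval₂_eq]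
  refine IsWeightedHomogeneous.sum _ _ _ fun e he => ?_
  refine IsWeightedHomogeneous.C_mul ?_ _
  have h1 := IsWeightedHomogeneous.prod e.support (fun i => f i ^ e i) (fun i => e i • a)
    (w := w) fun i _ => (hf i).pow _
  have h2 : ∑ i ∈ e.support, e i • a = n * a := by
    rw [← Finset.sum_smul, smul_eq_mul]
    congr 1
    have := hP (mem_support_iff.1 he)
    rw [Finsupp.weight_apply, Finsupp.sum] at this
    simpa using this
  rwa [h2] at h1

/-- The exponents of the monomials of bidegree `(2n, 3n)`. -/
noncomputable def bidegExps (n : ℕ) : Finset (Fin 4 →₀ ℕ) :=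
  (Finset.range (2 * n + 1) ×ˢ Finset.range (3 * n + 1)).image fun x =>
    Finsupp.equivFunOnFinite.symm ![x.1, 2 * n - x.1, x.2, 3 * n - x.2]

lemma card_bidegExps_le (n : ℕ) : (bidegExps n).card ≤ (2 * n + 1) * (3 * n + 1) :=
  Finset.card_image_le.trans (by simp)

lemma aeval_mem_restrictSupport (P : MvPolynomial (Fin 4) ℚ) (n : ℕ) (hP : P.IsHomogeneous n) :
    aeval f P ∈ restrictSupport ℚ (bidegExps n : Set (Fin 4 →₀ ℕ)) := by
  rw [mem_restrictSupport_iff]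
  intro e he
  have h1 := isWeightedHomogeneous_aeval (fun i => (f_isBihom i).1) P n hP (mem_support_iff.1 he)
  have h2 := isWeightedHomogeneous_aeval (fun i => (f_isBihom i).2) P n hP (mem_support_iff.1 he)
  simp [Finsupp.weight_apply, Finsupp.sum_fintype, Fin.sum_univ_four, wSU] at h1
  simp [Finsupp.weight_apply, Finsupp.sum_fintype, Fin.sum_univ_four, wTV] at h2
  rw [Finset.mem_coe, bidegExps, Finset.mem_image]
  refine ⟨(e 0, e 2), ?_, ?_⟩
  · simp only [Finset.mem_product, Finset.mem_range]
    lia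
  · ext j
    fin_cases j <;> simp <;> lia

/-- The `ℚ`-space of relations between `f₁, …, f₄`, i.e. the kernel of `Tᵢ ↦ fᵢ`. -/
noncomputable abbrev rels : Submodule ℚ (MvPolynomial (Fin 4) ℚ) :=
  LinearMap.ker (aeval f : MvPolynomial (Fin 4) ℚ →ₐ[ℚ] S).toLinearMap

/-- Forms of degree `n` are mapped to bihomogeneous polynomials of bidegree `(2n, 3n)`, which form
a space of dimension `(2n + 1)(3n + 1)`. -/
lemma choose_le_finrank_rels (n : ℕ) :
    (n + 3).choose 3 ≤
      Module.finrank ℚ (homogeneousSubmodule (Fin 4) ℚ n ⊓ rels : Submodule ℚ _) +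
        (2 * n + 1) * (3 * n + 1) := by
  let W := homogeneousSubmodule (Fin 4) ℚ n
  have : Module.Finite ℚ W := Module.Finite.iff_fg.2 (homogeneousSubmodule_fg _ _ n)
  let g : W →ₗ[ℚ] restrictSupport ℚ (bidegExps n : Set (Fin 4 →₀ ℕ)) :=
    ((aeval f : MvPolynomial (Fin 4) ℚ →ₐ[ℚ] S).toLinearMap.domRestrict W).codRestrict _
      fun P => aeval_mem_restrictSupport P n P.2
  have hfin : Module.Finite ℚ (restrictSupport ℚ (bidegExps n : Set (Fin 4 →₀ ℕ))) :=
    Module.Finite.of_basis (basisRestrictSupport ℚ _)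
  have h1 := LinearMap.finrank_range_add_finrank_ker g
  have h2 : Module.finrank ℚ (LinearMap.range g) ≤ (2 * n + 1) * (3 * n + 1) := by
    refine (Submodule.finrank_le _).trans ?_
    rw [Module.finrank_eq_card_basis (basisRestrictSupport ℚ _), ← Set.toFinset_card, Finset.toFinset_coe]
    exact card_bidegExps_le n
  have hker : (LinearMap.ker g).map W.subtype = W ⊓ rels := by
    ext P
    constructor
    · rintro ⟨Q, hQ, rfl⟩
      exact ⟨Q.2, congrArg Subtype.val hQ⟩
    · rintro ⟨hP, hP0⟩
      exact ⟨⟨P, hP⟩, Subtype.ext hP0, rfl⟩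
  rw [← Submodule.finrank_map_subtype_eq W (LinearMap.ker g), hker, finrank_homogeneousSubmodule] at h1
  rw [← h1, add_comm]
  exact Nat.add_le_add_left h2 _

/-- If an irreducible form of degree `d` is a relation, then the relations of degree `d + m` are
its multiples by forms of degree `m`. -/
lemma finrank_rels_le (H : MvPolynomial (Fin 4) ℚ) (d m : ℕ) (hH : H.IsHomogeneous d)
    (hirr : Irreducible H) (h0 : aeval f H = 0) :
    Module.finrank ℚ (homogeneousSubmodule (Fin 4) ℚ (d + m) ⊓ rels : Submodule ℚ _) ≤
      (m + 3).choose 3 := by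
  rw [← finrank_homogeneousSubmodule]
  have : Module.Finite ℚ (homogeneousSubmodule (Fin 4) ℚ m) :=
    Module.Finite.iff_fg.2 (homogeneousSubmodule_fg _ _ m)
  refine le_trans ?_ (Submodule.finrank_map_le (LinearMap.mulLeft ℚ H) _)
  refine Submodule.finrank_mono ?_
  rintro P ⟨hP, hP0⟩
  obtain ⟨Q, rfl⟩ := dvd_of_aeval_eq_zero H P hirr h0 hP0
  refine ⟨homogeneousComponent m Q, homogeneousComponent_isHomogeneous m Q, ?_⟩
  rw [LinearMap.mulLeft_apply, ← homogeneousComponent_mul_form H Q d m hH]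
  exact homogeneousComponent_eq_self hP

lemma choose_203 : (200 + 3).choose 3 = 1373701 := by
  rw [Nat.choose_eq_descFactorial_div_factorial]
  rfl

lemma choose_190 : Nat.choose 190 3 = 1125180 := by
  rw [Nat.choose_eq_descFactorial_div_factorial]
  rfl

/-- In degree `200` there are more forms than bihomogeneous polynomials of bidegree `(400, 600)`:
`1373701 > 241001`. -/
lemma exists_form : ∃ P : MvPolynomial (Fin 4) ℚ, P ≠ 0 ∧ P.IsHomogeneous 200 ∧
    aeval f P = 0 := by
  have h1 := choose_le_finrank_rels 200
  rw [choose_203] at h1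
  have h2 : (homogeneousSubmodule (Fin 4) ℚ 200 ⊓ rels : Submodule ℚ _) ≠ ⊥ := by
    intro h
    rw [h, finrank_bot] at h1
    lia
  obtain ⟨P, ⟨hP, hP0⟩, hne⟩ := Submodule.exists_mem_ne_zero_of_ne_bot h2
  exact ⟨P, hne, hP, hP0⟩

/-! ### Existence and irreducibility -/

/-- A relation of minimal total degree is irreducible, since the ideal of relations is prime. -/
lemma irreducible_of_minimal {σ k A : Type*} [Field k] [CommRing A] [IsDomain A] [Algebra k A]
    (a : σ → A) (F : MvPolynomial σ k)
    (hmin : ∀ G : MvPolynomial σ k, G ≠ 0 → aeval a G = 0 → F.totalDegree ≤ G.totalDegree)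
    (hF0 : F ≠ 0) (hFa : aeval a F = 0) : Irreducible F := by
  have key : ∀ p q : MvPolynomial σ k, F = p * q → aeval a p = 0 → IsUnit q := by
    intro p q e hp
    have ne := mul_ne_zero_iff.1 (e ▸ hF0)
    have h1 := hmin p ne.1 hp
    rw [e, totalDegree_mul_of_isDomain ne.1 ne.2] at h1
    have h2 : q.totalDegree = 0 := by lia
    rw [totalDegree_eq_zero_iff_eq_C.1 h2]
    refine (isUnit_iff_ne_zero.2 fun h3 => ?_).map C
    exact ne.2 (by rw [totalDegree_eq_zero_iff_eq_C.1 h2, h3, C_0])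
  refine ⟨fun hu => (hu.map (aeval a)).ne_zero hFa, fun p q e => ?_⟩
  rcases mul_eq_zero.1 ((map_mul (aeval a) p q).symm.trans (e ▸ hFa)) with h | h
  · exact .inr (key p q e h)
  · exact .inl (key q p (e.trans (mul_comm p q)) h)

lemma exists_nat_min (Q : ℕ → Prop) (N : ℕ) (hN : Q N) : ∃ d, Q d ∧ ∀ m, Q m → d ≤ m := by
  classical
  exact ⟨Nat.find ⟨N, hN⟩, Nat.find_spec ⟨N, hN⟩, fun m hm => Nat.find_min' _ hm⟩

/-- A nonzero relation of minimal degree can be taken to be a form, and it is irreducible. -/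
lemma exists_irreducible_form (N : ℕ) (hN : ∃ P : MvPolynomial (Fin 4) ℚ, P ≠ 0 ∧
    P.IsHomogeneous N ∧ aeval f P = 0) : ∃ (H : MvPolynomial (Fin 4) ℚ) (d : ℕ), d ≤ N ∧
    H.IsHomogeneous d ∧ Irreducible H ∧ aeval f H = 0 := by
  obtain ⟨d, ⟨H, hne, hH, hH0⟩, hmin⟩ := exists_nat_min (fun d => ∃ P : MvPolynomial (Fin 4) ℚ,
    P ≠ 0 ∧ P.IsHomogeneous d ∧ aeval f P = 0) N hN
  refine ⟨H, d, hmin N hN, hH, ?_, hH0⟩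
  have hmin' : ∀ G : MvPolynomial (Fin 4) ℚ, G ≠ 0 → aeval f G = 0 →
      H.totalDegree ≤ G.totalDegree := by
    intro G hG hG0
    obtain ⟨i, hi, hi0⟩ :
        ∃ i ∈ Finset.range (G.totalDegree + 1), homogeneousComponent i G ≠ 0 := by
      by_contra! hall
      exact hG (by rw [← sum_homogeneousComponent G, Finset.sum_eq_zero hall])
    rw [Finset.mem_range, Nat.lt_succ_iff] at hi
    rw [hH.totalDegree hne]
    exact (hmin i ⟨_, hi0, homogeneousComponent_isHomogeneous i G,
      aeval_homogeneousComponent G hG0 i⟩).trans hi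
  exact irreducible_of_minimal f H hmin' hne hH0

end Implicit

/-- There exists an irreducible homogeneous polynomial `H ∈ ℚ[T₁,T₂,T₃,T₄]` of degree `12`
with `H(f₁,f₂,f₃,f₄) = 0`; moreover `H` generates the ideal of all polynomials of
`ℚ[T₁,T₂,T₃,T₄]` vanishing at `(f₁(p), f₂(p), f₃(p), f₄(p))` for every point `p ∈ ℚ⁴`:
the vanishing ideal of the Zariski closure of the image of the parametrization is
principal, generated by the implicit equation `H`. -/
theorem implicit_equation_exists :
    ∃ H : MvPolynomial (Fin 4) ℚ,
      H.IsHomogeneous 12 ∧ Irreducible H ∧ MvPolynomial.aeval f H = 0 ∧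
        ∀ P : MvPolynomial (Fin 4) ℚ,
          (∀ p : Fin 4 → ℚ,
              MvPolynomial.eval (fun i => MvPolynomial.eval p (f i)) P = 0) ↔
            P ∈ Ideal.span {H} := by
  obtain ⟨H, d, hd, hH, hirr, hH0⟩ := Implicit.exists_irreducible_form 200 Implicit.exists_form
  have hd12 : d = 12 := by
    have hlow : ¬ d ≤ 11 := fun h => hirr.ne_zero (Implicit.form_rat_eq_zero H d h hH hH0)
    by_contra hne
    -- for `d ≥ 13` the relations of degree `200` have dimension at most `C(190, 3)`, which is
    -- less than the lower bound `C(203, 3) - 401 · 601`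
    obtain ⟨m, hm⟩ := Nat.exists_eq_add_of_le hd
    have h1 := Implicit.choose_le_finrank_rels 200
    have h2 := Implicit.finrank_rels_le H d m hH hirr hH0
    rw [← hm] at h2
    have h3 : (m + 3).choose 3 ≤ Nat.choose 190 3 := Nat.choose_le_choose 3 (by lia)
    rw [Implicit.choose_190] at h3
    rw [Implicit.choose_203] at h1
    lia
  subst hd12
  refine ⟨H, hH, hirr, hH0, fun P => ?_⟩
  rw [Ideal.mem_span_singleton]
  have heval : ∀ p : Fin 4 → ℚ, eval p (aeval f P) = eval (fun i => eval p (f i)) P := by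
    intro p
    rw [← coe_aeval_eq_eval, RingHom.coe_coe, ← AlgHom.comp_apply, comp_aeval]
    rfl
  constructor
  · intro h
    refine Implicit.dvd_of_aeval_eq_zero H P hirr hH0 (MvPolynomial.funext fun p => ?_)
    rw [heval, h, map_zero]
  · rintro ⟨Q, rfl⟩ p
    rw [← heval, map_mul, hH0, zero_mul, map_zero]
end
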